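/- arXiv:1608.04575 — 3 statements merged into one kernel-verified Lean document; each statement's English description precedes it below -/
import Mathlib

section
/- Let a = (a₁,…,aₙ) ∈ [1,∞)ⁿ and a_t ≥ 1. Let k₀, k ∈ 𝓢(ℝⁿ) satisfy: supp k₀, supp k ⊆ {x ∈ ℝⁿ : xₙ ≥ 0}, k has vanishing moments of all orders, and Σ_{j=0}^∞ k_j * u = u in 𝓢'(ℝⁿ) for every u ∈ 𝓢'(ℝⁿ). Let η ∈ 𝓢(ℝ) with η(0) = 1. For u ∈ 𝓢'(ℝⁿ) and t ∈ ℝ define Qu(·,t) by ⟨Qu(·,t), φ⟩ = Σ_{j=0}^∞ η(2^{j a_t} t)·⟨k_j * u, φ⟩ for φ ∈ 𝓢(ℝⁿ). Then: for every φ ∈ 𝓢(ℝⁿ) the series converges absolutely, uniformly in t ∈ ℝ; Qu(·,t) ∈ 𝓢'(ℝⁿ) for every t; the map t ↦ Qu(·,t) is weak*-continuous with sup_{t∈ℝ} |⟨Qu(·,t), φ⟩| < ∞ for each φ; and Qu(·,0) = u. -/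
open MeasureTheory Filter Topology

noncomputable section

/-- Anisotropic dilation: `θ_0 = θ₀` and `θ_j(x) = 2^{j|a|} θ(2^{ja}x)` for `j ≥ 1`. -/
def anisoDil {m : ℕ} (a : Fin m → ℝ) (θ₀ θ : (Fin m → ℝ) → ℝ) (j : ℕ)
    (x : Fin m → ℝ) : ℝ :=
  if j = 0 then θ₀ x
  else (2:ℝ) ^ ((j:ℝ) * ∑ i, a i) * θ (fun i => (2:ℝ) ^ ((j:ℝ) * a i) * x i)

/-- `θ` has vanishing moments of all orders. -/
def VanishingMoments {m : ℕ} (θ : (Fin m → ℝ) → ℝ) : Prop :=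
  ∀ α : Fin m → ℕ, (∫ x : Fin m → ℝ, (∏ i, x i ^ α i) * θ x) = 0

/-!
Substituting `y = x + 2^{-ja} w` turns `ǩ_j * φ (x) = ∫ k_j(y - x) φ(y) dy` into the average
`∫ k(w) φ(x + 2^{-ja} w) dw`. As `∫ k = 0`, the value `φ x` may be subtracted from
`φ(x + 2^{-ja} w)` inside the average, and the mean value inequality gains the factor
`‖2^{-ja}‖ ≤ rʲ` with `r < 1`. The same holds for all derivatives of `φ` with polynomial weights,
so `|⟨k_j * u, φ⟩| ≤ rʲ p(φ)` for one continuous seminorm `p` on the Schwartz space. The bounded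
factor `η(2^{j a_t} t)` then leaves a series dominated by a geometric one, uniformly in `t`; at
`t = 0` it is the reproducing series.
-/

open scoped SchwartzMap

section WeightedTranslates

variable {E F : Type*} [NormedAddCommGroup E]

theorem one_add_norm_le_mul_one_add_norm_sub (x z : E) :
    1 + ‖x‖ ≤ (1 + ‖z‖) * (1 + ‖z - x‖) := by
  have htri : ‖x‖ ≤ ‖z‖ + ‖z - x‖ := norm_le_norm_add_norm_sub z x
  nlinarith [mul_nonneg (norm_nonneg z) (norm_nonneg (z - x))]

variable [NormedAddCommGroup F]

theorem one_add_norm_pow_mul_norm_apply_add_le {g : E → F} {M : ℕ} {A : ℝ}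
    (hA : ∀ y, (1 + ‖y‖) ^ M * ‖g y‖ ≤ A) (x h : E) :
    (1 + ‖x‖) ^ M * ‖g (x + h)‖ ≤ A * (1 + ‖h‖) ^ M := by
  calc (1 + ‖x‖) ^ M * ‖g (x + h)‖
      ≤ ((1 + ‖x + h‖) * (1 + ‖h‖)) ^ M * ‖g (x + h)‖ := by
        gcongr
        simpa using one_add_norm_le_mul_one_add_norm_sub x (x + h)
    _ = (1 + ‖x + h‖) ^ M * ‖g (x + h)‖ * (1 + ‖h‖) ^ M := by
        rw [mul_pow]
        ring
    _ ≤ A * (1 + ‖h‖) ^ M := by gcongr; exact hA _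

variable [NormedSpace ℝ E] [NormedSpace ℝ F]

theorem one_add_norm_pow_mul_norm_apply_add_sub_le {g : E → F} (hg : Differentiable ℝ g) {M : ℕ}
    {A : ℝ} (hA : ∀ y, (1 + ‖y‖) ^ M * ‖fderiv ℝ g y‖ ≤ A) (x h : E) :
    (1 + ‖x‖) ^ M * ‖g (x + h) - g x‖ ≤ A * (1 + ‖h‖) ^ M * ‖h‖ := by
  have hx : 0 < (1 + ‖x‖) ^ M := by positivity
  have hA₀ : 0 ≤ A := le_trans (by positivity) (hA 0)
  have hderiv : ∀ z ∈ segment ℝ x (x + h),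
      ‖fderiv ℝ g z‖ ≤ A * (1 + ‖h‖) ^ M / (1 + ‖x‖) ^ M := fun z hz => by
    have hzx : ‖z - x‖ ≤ ‖h‖ := by simpa using norm_sub_le_of_mem_segment hz
    rw [le_div_iff₀' hx]
    calc (1 + ‖x‖) ^ M * ‖fderiv ℝ g z‖
        ≤ A * (1 + ‖z - x‖) ^ M := by
          simpa using one_add_norm_pow_mul_norm_apply_add_le hA x (z - x)
      _ ≤ A * (1 + ‖h‖) ^ M := by gcongr
  have hmv := (convex_segment x (x + h)).norm_image_sub_le_of_norm_fderiv_le (fun z _ => hg z)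
    hderiv (left_mem_segment ℝ _ _) (right_mem_segment ℝ _ _)
  rwa [add_sub_cancel_left, div_mul_eq_mul_div, le_div_iff₀' hx] at hmv

theorem one_add_norm_clm_apply_le (δ : E →L[ℝ] E) (w : E) :
    1 + ‖δ w‖ ≤ (1 + ‖δ‖) * (1 + ‖w‖) := by
  nlinarith [δ.le_opNorm w, norm_nonneg δ, norm_nonneg w]

end WeightedTranslates

/-- The average `x ↦ ∫ κ(w) g(x + δ w) dμ(w)` of the translates of `g`, with weight `κ` dilated
by `δ`. For Lebesgue measure and invertible `δ` it is the convolution of `g` with the reflection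
of `|det δ|⁻¹ κ(δ⁻¹ ·)`. -/
def dilatedAverage {E F : Type*} [NormedAddCommGroup E] [NormedSpace ℝ E] [MeasurableSpace E]
    [NormedAddCommGroup F] [NormedSpace ℝ F] (μ : Measure E) (κ : E → ℝ) (δ : E →L[ℝ] E)
    (g : E → F) (x : E) : F :=
  ∫ w, κ w • g (x + δ w) ∂μ

/-- The norm of `κ` in the weighted space `L¹((1 + ‖w‖)ᴺ dμ)`, meaningful only when the integrand
is integrable. -/
def weightedL1Norm {E : Type*} [NormedAddCommGroup E] [MeasurableSpace E] (μ : Measure E) (N : ℕ)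
    (κ : E → ℝ) : ℝ :=
  ∫ w, (1 + ‖w‖) ^ N * ‖κ w‖ ∂μ

section DilatedAverage

variable {E F G : Type*} [NormedAddCommGroup E] [MeasurableSpace E] [NormedAddCommGroup F]
  [NormedSpace ℝ F] [NormedAddCommGroup G] [NormedSpace ℝ G] {μ : Measure E}

theorem weightedL1Norm_nonneg (μ : Measure E) (N : ℕ) (κ : E → ℝ) : 0 ≤ weightedL1Norm μ N κ :=
  integral_nonneg fun _ => by positivity

theorem mul_norm_integral_smul_le {κ : E → ℝ} {N : ℕ}
    (hκ : Integrable (fun w => (1 + ‖w‖) ^ N * ‖κ w‖) μ) {f : E → F} {c D : ℝ} (hc : 0 ≤ c)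
    (hf : ∀ w, c * ‖f w‖ ≤ D * (1 + ‖w‖) ^ N) :
    c * ‖∫ w, κ w • f w ∂μ‖ ≤ D * weightedL1Norm μ N κ := by
  rw [← abs_of_nonneg hc, ← Real.norm_eq_abs, ← norm_smul, ← integral_smul, weightedL1Norm,
    ← integral_const_mul]
  refine norm_integral_le_of_norm_le (hκ.const_mul D) (.of_forall fun w => ?_)
  calc ‖c • κ w • f w‖ = ‖κ w‖ * (c * ‖f w‖) := by
        rw [norm_smul, norm_smul, Real.norm_of_nonneg hc, mul_left_comm]
    _ ≤ ‖κ w‖ * (D * (1 + ‖w‖) ^ N) := mul_le_mul_of_nonneg_left (hf w) (norm_nonneg _)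
    _ = D * ((1 + ‖w‖) ^ N * ‖κ w‖) := by ring

variable [NormedSpace ℝ E]

theorem one_add_norm_pow_mul_dilatedAverage_le {κ : E → ℝ} {M : ℕ}
    (hκ : Integrable (fun w => (1 + ‖w‖) ^ M * ‖κ w‖) μ) (δ : E →L[ℝ] E) {g : E → F} {A : ℝ}
    (hA : ∀ y, (1 + ‖y‖) ^ M * ‖g y‖ ≤ A) (x : E) :
    (1 + ‖x‖) ^ M * ‖dilatedAverage μ κ δ g x‖ ≤
      A * (1 + ‖δ‖) ^ M * weightedL1Norm μ M κ := by
  have hA₀ : 0 ≤ A := le_trans (by positivity) (hA 0)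
  refine mul_norm_integral_smul_le hκ (by positivity) fun w => ?_
  calc (1 + ‖x‖) ^ M * ‖g (x + δ w)‖
      ≤ A * (1 + ‖δ w‖) ^ M := one_add_norm_pow_mul_norm_apply_add_le hA x (δ w)
    _ ≤ A * ((1 + ‖δ‖) * (1 + ‖w‖)) ^ M := by gcongr; exact one_add_norm_clm_apply_le δ w
    _ = A * (1 + ‖δ‖) ^ M * (1 + ‖w‖) ^ M := by rw [mul_pow, mul_assoc]

theorem dilatedAverage_comp_linearIsometryEquiv (κ : E → ℝ) (δ : E →L[ℝ] E) (g : E → F)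
    (L : F ≃ₗᵢ[ℝ] G) : dilatedAverage μ κ δ (L ∘ g) = L ∘ dilatedAverage μ κ δ g := by
  funext x
  simp only [dilatedAverage, Function.comp_apply, ← map_smul]
  exact L.toContinuousLinearEquiv.integral_comp_comm _

variable [BorelSpace E] [SecondCountableTopology E]

theorem integrable_smul_comp_add {κ : E → ℝ} (hκ : Integrable κ μ) (δ : E →L[ℝ] E) {g : E → F}
    (hg : Continuous g) {C : ℝ} (hC : ∀ y, ‖g y‖ ≤ C) (x : E) :
    Integrable (fun w => κ w • g (x + δ w)) μ :=
  hκ.smul_of_top_left <| memLp_top_of_bound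
    (hg.comp (continuous_const.add δ.continuous)).aestronglyMeasurable C (.of_forall fun _ => hC _)

theorem hasFDerivAt_dilatedAverage {κ : E → ℝ} (hκ : Integrable κ μ) (δ : E →L[ℝ] E)
    {g : E → F} (hg : ContDiff ℝ 1 g) {C C' : ℝ} (hC : ∀ y, ‖g y‖ ≤ C)
    (hC' : ∀ y, ‖fderiv ℝ g y‖ ≤ C') (x : E) :
    HasFDerivAt (dilatedAverage μ κ δ g) (dilatedAverage μ κ δ (fderiv ℝ g) x) x := by
  have hint := integrable_smul_comp_add hκ δ hg.continuous hC
  refine hasFDerivAt_integral_of_dominated_of_fderiv_le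
    (F' := fun x w => κ w • fderiv ℝ g (x + δ w)) (bound := fun w => ‖κ w‖ * C') univ_mem
    (.of_forall fun y => (hint y).aestronglyMeasurable) (hint x)
    (integrable_smul_comp_add hκ δ (hg.continuous_fderiv one_ne_zero)
      hC' x).aestronglyMeasurable
    (.of_forall fun w y _ => ?_) (hκ.norm.mul_const C') (.of_forall fun w y _ => ?_)
  · rw [norm_smul]
    gcongr
    exact hC' _
  · exact ((hasFDerivAt_comp_add_right (δ w)).2
      (hg.differentiable one_ne_zero _).hasFDerivAt).const_smul (κ w)

theorem one_add_norm_pow_mul_dilatedAverage_le_of_integral_eq_zero [CompleteSpace F]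
    {κ : E → ℝ} (hκ : Integrable κ μ) {M : ℕ}
    (hκM : Integrable (fun w => (1 + ‖w‖) ^ (M + 1) * ‖κ w‖) μ) (hκ₀ : ∫ w, κ w ∂μ = 0)
    (δ : E →L[ℝ] E) {g : E → F} (hg : Differentiable ℝ g) {C A : ℝ} (hC : ∀ y, ‖g y‖ ≤ C)
    (hA : ∀ y, (1 + ‖y‖) ^ M * ‖fderiv ℝ g y‖ ≤ A) (x : E) :
    (1 + ‖x‖) ^ M * ‖dilatedAverage μ κ δ g x‖ ≤
      A * (1 + ‖δ‖) ^ M * ‖δ‖ * weightedL1Norm μ (M + 1) κ := by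
  have hA₀ : 0 ≤ A := le_trans (by positivity) (hA 0)
  have hsub : dilatedAverage μ κ δ g x = ∫ w, κ w • (g (x + δ w) - g x) ∂μ := by
    simp_rw [smul_sub]
    rw [integral_sub (integrable_smul_comp_add hκ δ hg.continuous hC x) (hκ.smul_const _),
      integral_smul_const, hκ₀, zero_smul, sub_zero, dilatedAverage]
  rw [hsub]
  refine mul_norm_integral_smul_le hκM (by positivity) fun w => ?_
  calc (1 + ‖x‖) ^ M * ‖g (x + δ w) - g x‖
      ≤ A * (1 + ‖δ w‖) ^ M * ‖δ w‖ := one_add_norm_pow_mul_norm_apply_add_sub_le hg hA x (δ w)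
    _ ≤ A * ((1 + ‖δ‖) * (1 + ‖w‖)) ^ M * (‖δ‖ * (1 + ‖w‖)) := by
        gcongr
        · exact one_add_norm_clm_apply_le δ w
        · exact (δ.le_opNorm w).trans (by gcongr; linarith)
    _ = A * (1 + ‖δ‖) ^ M * ‖δ‖ * (1 + ‖w‖) ^ (M + 1) := by
        rw [mul_pow]
        ring

end DilatedAverage

section SchwartzAverage

variable {E F : Type*} [NormedAddCommGroup E] [NormedSpace ℝ E] [NormedAddCommGroup F]
  [NormedSpace ℝ F]

theorem one_add_norm_pow_mul_iteratedFDeriv_le (φ : 𝓢(E, F)) (k l : ℕ) (y : E) :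
    (1 + ‖y‖) ^ k * ‖iteratedFDeriv ℝ l φ y‖ ≤
      2 ^ k * (Finset.Iic (k, l)).sup (schwartzSeminormFamily ℝ E F) φ :=
  SchwartzMap.one_add_le_sup_seminorm_apply (𝕜 := ℝ) (m := (k, l)) le_rfl le_rfl φ y

variable [MeasurableSpace E] [BorelSpace E] [SecondCountableTopology E] {μ : Measure E}
  [μ.HasTemperateGrowth]

theorem integrable_one_add_norm_pow_mul (κ : 𝓢(E, ℝ)) (N : ℕ) :
    Integrable (fun w => (1 + ‖w‖) ^ N * ‖κ w‖) μ := by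
  simp only [add_comm (1 : ℝ), add_pow, Finset.sum_mul, one_pow, mul_one, mul_right_comm _ _ ‖κ _‖]
  exact integrable_finsetSum _ fun i _ => (κ.integrable_pow_mul μ i).mul_const _

theorem hasFDerivAt_dilatedAverage_iteratedFDeriv (κ : 𝓢(E, ℝ)) (δ : E →L[ℝ] E) (φ : 𝓢(E, F))
    (l : ℕ) (x : E) :
    HasFDerivAt (dilatedAverage μ κ δ (iteratedFDeriv ℝ l φ))
      (dilatedAverage μ κ δ (fderiv ℝ (iteratedFDeriv ℝ l φ)) x) x :=
  hasFDerivAt_dilatedAverage κ.integrable δ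
    ((φ.smooth ⊤).iteratedFDeriv_right (mod_cast le_top))
    (SchwartzMap.norm_iteratedFDeriv_le_seminorm ℝ φ l)
    (fun y => norm_fderiv_iteratedFDeriv.trans_le
      (SchwartzMap.norm_iteratedFDeriv_le_seminorm ℝ φ (l + 1) y)) x

theorem iteratedFDeriv_dilatedAverage (κ : 𝓢(E, ℝ)) (δ : E →L[ℝ] E) (φ : 𝓢(E, F)) (l : ℕ) :
    iteratedFDeriv ℝ l (dilatedAverage μ κ δ φ) =
      dilatedAverage μ κ δ (iteratedFDeriv ℝ l φ) := by
  induction l with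
  | zero =>
    simp only [iteratedFDeriv_zero_eq_comp]
    exact (dilatedAverage_comp_linearIsometryEquiv κ δ φ
      (continuousMultilinearCurryFin0 ℝ E F).symm).symm
  | succ l ih =>
    have hfderiv : fderiv ℝ (dilatedAverage μ κ δ (iteratedFDeriv ℝ l φ)) =
        dilatedAverage μ κ δ (fderiv ℝ (iteratedFDeriv ℝ l φ)) :=
      funext fun x => (hasFDerivAt_dilatedAverage_iteratedFDeriv κ δ φ l x).fderiv
    rw [iteratedFDeriv_succ_eq_comp_left, ih, hfderiv, iteratedFDeriv_succ_eq_comp_left]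
    exact (dilatedAverage_comp_linearIsometryEquiv (G := E [×(l + 1)]→L[ℝ] F) κ δ
      (fderiv ℝ (iteratedFDeriv ℝ l φ))
      (continuousMultilinearCurryLeftEquiv ℝ (fun _ : Fin (l + 1) => E) F).symm).symm

theorem contDiff_dilatedAverage (κ : 𝓢(E, ℝ)) (δ : E →L[ℝ] E) (φ : 𝓢(E, F)) :
    ContDiff ℝ (⊤ : ℕ∞) (dilatedAverage μ κ δ φ) :=
  contDiff_of_differentiable_iteratedFDeriv fun l _ => by
    rw [iteratedFDeriv_dilatedAverage]
    exact fun x => (hasFDerivAt_dilatedAverage_iteratedFDeriv κ δ φ l x).differentiableAt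

theorem norm_pow_mul_iteratedFDeriv_dilatedAverage_le (κ : 𝓢(E, ℝ)) (δ : E →L[ℝ] E)
    (φ : 𝓢(E, F)) (k l : ℕ) (x : E) :
    ‖x‖ ^ k * ‖iteratedFDeriv ℝ l (dilatedAverage μ κ δ φ) x‖ ≤
      2 ^ k * (1 + ‖δ‖) ^ k * weightedL1Norm μ k κ *
        (Finset.Iic (k, l)).sup (schwartzSeminormFamily ℝ E F) φ := by
  rw [iteratedFDeriv_dilatedAverage]
  calc ‖x‖ ^ k * ‖dilatedAverage μ κ δ (iteratedFDeriv ℝ l φ) x‖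
      ≤ (1 + ‖x‖) ^ k * ‖dilatedAverage μ κ δ (iteratedFDeriv ℝ l φ) x‖ := by
        gcongr
        linarith
    _ ≤ _ := one_add_norm_pow_mul_dilatedAverage_le (integrable_one_add_norm_pow_mul κ k) δ
        (one_add_norm_pow_mul_iteratedFDeriv_le φ k l) x
    _ = _ := by ring

theorem norm_pow_mul_iteratedFDeriv_dilatedAverage_le_of_integral_eq_zero [CompleteSpace F]
    (κ : 𝓢(E, ℝ)) (hκ : ∫ w, κ w ∂μ = 0) (δ : E →L[ℝ] E) (φ : 𝓢(E, F)) (k l : ℕ) (x : E) :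
    ‖x‖ ^ k * ‖iteratedFDeriv ℝ l (dilatedAverage μ κ δ φ) x‖ ≤
      ‖δ‖ * (2 ^ k * (1 + ‖δ‖) ^ k * weightedL1Norm μ (k + 1) κ *
        (Finset.Iic (k, l + 1)).sup (schwartzSeminormFamily ℝ E F) φ) := by
  have hsmooth : ContDiff ℝ 1 (iteratedFDeriv ℝ l φ) :=
    (φ.smooth ⊤).iteratedFDeriv_right (mod_cast le_top)
  rw [iteratedFDeriv_dilatedAverage]
  calc ‖x‖ ^ k * ‖dilatedAverage μ κ δ (iteratedFDeriv ℝ l φ) x‖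
      ≤ (1 + ‖x‖) ^ k * ‖dilatedAverage μ κ δ (iteratedFDeriv ℝ l φ) x‖ := by
        gcongr
        linarith
    _ ≤ _ := one_add_norm_pow_mul_dilatedAverage_le_of_integral_eq_zero κ.integrable
        (integrable_one_add_norm_pow_mul κ (k + 1)) hκ δ (hsmooth.differentiable one_ne_zero)
        (SchwartzMap.norm_iteratedFDeriv_le_seminorm ℝ φ l)
        (fun y => by
          rw [norm_fderiv_iteratedFDeriv]
          exact one_add_norm_pow_mul_iteratedFDeriv_le φ k (l + 1) y) x
    _ = _ := by ring

/-- `dilatedAverage` as a continuous linear operator on the Schwartz space. -/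
def dilatedAverageCLM (μ : Measure E) [μ.HasTemperateGrowth] (κ : 𝓢(E, ℝ)) (δ : E →L[ℝ] E) :
    𝓢(E, F) →L[ℝ] 𝓢(E, F) :=
  have hint (φ : 𝓢(E, F)) (x : E) : Integrable (fun w => κ w • φ (x + δ w)) μ :=
    integrable_smul_comp_add κ.integrable δ φ.continuous (SchwartzMap.norm_le_seminorm ℝ φ) x
  SchwartzMap.mkCLM (σ := RingHom.id ℝ) (fun φ => dilatedAverage μ κ δ φ)
    (fun φ ψ x => by
      simp only [dilatedAverage, add_apply, smul_add]
      exact integral_add (hint φ x) (hint ψ x))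
    (fun c φ x => by
      simp only [dilatedAverage, smul_apply, RingHom.id_apply, smul_comm _ c]
      exact integral_smul c _)
    (contDiff_dilatedAverage κ δ)
    (fun ⟨k, l⟩ => ⟨Finset.Iic (k, l), 2 ^ k * (1 + ‖δ‖) ^ k * weightedL1Norm μ k κ,
      mul_nonneg (by positivity) (weightedL1Norm_nonneg μ k κ),
      fun φ x => norm_pow_mul_iteratedFDeriv_dilatedAverage_le κ δ φ k l x⟩)

theorem dilatedAverageCLM_apply (κ : 𝓢(E, ℝ)) (δ : E →L[ℝ] E) (φ : 𝓢(E, F)) (x : E) :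
    dilatedAverageCLM μ κ δ φ x = dilatedAverage μ κ δ φ x :=
  rfl

variable [CompleteSpace F]

theorem exists_seminorm_dilatedAverageCLM_le (κ : 𝓢(E, ℝ)) (hκ : ∫ w, κ w ∂μ = 0) (k l : ℕ) :
    ∃ p : Seminorm ℝ 𝓢(E, F), Continuous p ∧ ∀ δ : E →L[ℝ] E, ‖δ‖ ≤ 1 → ∀ φ,
      SchwartzMap.seminorm ℝ k l (dilatedAverageCLM μ κ δ φ) ≤ ‖δ‖ * p φ := by
  have hW := weightedL1Norm_nonneg μ (k + 1) κ
  set q : Seminorm ℝ 𝓢(E, F) := (Finset.Iic (k, l + 1)).sup (schwartzSeminormFamily ℝ E F)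
  have hq : Continuous q :=
    Seminorm.continuous_finsetSup fun i _ => (schwartz_withSeminorms ℝ E F).continuous_seminorm i
  let K : NNReal := ⟨2 ^ k * 2 ^ k * weightedL1Norm μ (k + 1) κ, by positivity⟩
  refine ⟨K • q, hq.const_smul K, fun δ hδ φ => ?_⟩
  have hδ₂ : 1 + ‖δ‖ ≤ 2 := by linarith
  refine SchwartzMap.seminorm_le_bound ℝ k l _ (by positivity) fun x =>
    (norm_pow_mul_iteratedFDeriv_dilatedAverage_le_of_integral_eq_zero κ hκ δ φ k l x).trans ?_
  change _ ≤ ‖δ‖ * (2 ^ k * 2 ^ k * weightedL1Norm μ (k + 1) κ * q φ)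
  gcongr

theorem exists_continuous_seminorm_dilatedAverageCLM_le (κ : 𝓢(E, ℝ)) (hκ : ∫ w, κ w ∂μ = 0)
    {q : Seminorm ℝ 𝓢(E, F)} (hq : Continuous q) :
    ∃ p : Seminorm ℝ 𝓢(E, F), Continuous p ∧ ∀ δ : E →L[ℝ] E, ‖δ‖ ≤ 1 → ∀ φ,
      q (dilatedAverageCLM μ κ δ φ) ≤ ‖δ‖ * p φ := by
  obtain ⟨s, C, -, hqC⟩ := Seminorm.bound_of_continuous (schwartz_withSeminorms ℝ E F) q hq
  choose p hp hpδ using fun i : ℕ × ℕ =>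
    exists_seminorm_dilatedAverageCLM_le (F := F) κ hκ i.1 i.2
  refine ⟨C • s.sup p, (Seminorm.continuous_finsetSup fun i _ => hp i).const_smul C,
    fun δ hδ φ => ?_⟩
  have hsup : s.sup (schwartzSeminormFamily ℝ E F) (dilatedAverageCLM μ κ δ φ) ≤
      ‖δ‖ * s.sup p φ :=
    Seminorm.finset_sup_apply_le (mul_nonneg (norm_nonneg δ) (apply_nonneg _ φ)) fun i hi =>
      (hpδ i δ hδ φ).trans (by gcongr; exact Seminorm.le_finset_sup_apply hi)
  calc q (dilatedAverageCLM μ κ δ φ)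
      ≤ C * s.sup (schwartzSeminormFamily ℝ E F) (dilatedAverageCLM μ κ δ φ) := hqC _
    _ ≤ C * (‖δ‖ * s.sup p φ) := by gcongr
    _ = ‖δ‖ * (C • s.sup p) φ := mul_left_comm _ _ _

end SchwartzAverage

section AnisotropicDilation

variable {m : ℕ}

/-- The vector `(2^{-a₁}, …, 2^{-aₘ})`. Multiplication by its `j`-th power in the product algebra
`Fin m → ℝ` is the dilation `w ↦ 2^{-ja} w`. -/
def anisoScale (a : Fin m → ℝ) : Fin m → ℝ := fun i => 2 ^ (-a i)

theorem norm_anisoScale_lt_one {a : Fin m → ℝ} (ha : ∀ i, 0 < a i) : ‖anisoScale a‖ < 1 := by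
  refine (pi_norm_lt_iff one_pos).2 fun i => ?_
  rw [anisoScale, Real.norm_of_nonneg (by positivity)]
  exact Real.rpow_lt_one_of_one_lt_of_neg one_lt_two (neg_neg_of_pos (ha i))

theorem anisoScale_pow_apply (a : Fin m → ℝ) (j : ℕ) (i : Fin m) :
    (anisoScale a ^ j) i = ((2 : ℝ) ^ ((j : ℝ) * a i))⁻¹ := by
  rw [Pi.pow_apply, anisoScale, ← Real.rpow_mul_natCast zero_le_two, ← Real.rpow_neg zero_le_two,
    neg_mul, mul_comm]

theorem det_mul_anisoScale_pow (a : Fin m → ℝ) (j : ℕ) :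
    (ContinuousLinearMap.mul ℝ (Fin m → ℝ) (anisoScale a ^ j)).det =
      ((2 : ℝ) ^ ((j : ℝ) * ∑ i, a i))⁻¹ := by
  have hpi : (ContinuousLinearMap.mul ℝ (Fin m → ℝ) (anisoScale a ^ j) : _ →ₗ[ℝ] _) =
      LinearMap.pi fun i => LinearMap.mulLeft ℝ ((anisoScale a ^ j) i) ∘ₗ LinearMap.proj i := rfl
  rw [ContinuousLinearMap.det, hpi, LinearMap.det_pi]
  simp only [LinearMap.det_mulLeft, anisoScale_pow_apply]
  rw [Finset.prod_inv_distrib, Finset.mul_sum, Real.rpow_sum_of_pos two_pos]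

theorem anisoDil_anisoScale_pow_mul (a : Fin m → ℝ) (θ₀ θ : (Fin m → ℝ) → ℝ) (j : ℕ)
    (w : Fin m → ℝ) :
    anisoDil a θ₀ θ j (anisoScale a ^ j * w) =
      (2 : ℝ) ^ ((j : ℝ) * ∑ i, a i) * (if j = 0 then θ₀ else θ) w := by
  rcases eq_or_ne j 0 with rfl | hj
  · simp [anisoDil]
  · have hcancel : (fun i => (2 : ℝ) ^ ((j : ℝ) * a i) * (anisoScale a ^ j * w) i) = w := by
      funext i
      rw [Pi.mul_apply, anisoScale_pow_apply, mul_inv_cancel_left₀ (by positivity)]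
    rw [anisoDil, if_neg hj, if_neg hj, hcancel]

theorem integral_eq_integral_abs_det_smul_add {E F : Type*} [NormedAddCommGroup E]
    [NormedSpace ℝ E] [FiniteDimensional ℝ E] [MeasurableSpace E] [BorelSpace E]
    [NormedAddCommGroup F] [NormedSpace ℝ F] (μ : Measure E) [μ.IsAddHaarMeasure]
    {δ : E →L[ℝ] E} (hδ : δ.det ≠ 0) (x : E) (g : E → F) :
    ∫ y, g y ∂μ = ∫ w, |δ.det| • g (x + δ w) ∂μ := by
  have hbij : Function.Bijective fun w => x + δ w :=
    (AddGroup.addLeft_bijective x).comp (LinearMap.equivOfDetNeZero _ hδ).bijective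
  have h := integral_image_eq_integral_abs_det_fderiv_smul μ MeasurableSet.univ
    (fun w _ => (δ.hasFDerivWithinAt.const_add x)) hbij.injective.injOn g
  rwa [Set.image_univ, hbij.surjective.range_eq, setIntegral_univ, setIntegral_univ] at h

theorem integral_anisoDil_sub_mul (a : Fin m → ℝ) (θ₀ θ φ : (Fin m → ℝ) → ℝ) (j : ℕ)
    (x : Fin m → ℝ) :
    ∫ y, anisoDil a θ₀ θ j (y - x) * φ y =
      dilatedAverage volume (if j = 0 then θ₀ else θ)
        (ContinuousLinearMap.mul ℝ (Fin m → ℝ) (anisoScale a ^ j)) φ x := by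
  have hdet := det_mul_anisoScale_pow a j
  rw [integral_eq_integral_abs_det_smul_add volume (by rw [hdet]; positivity) x, dilatedAverage,
    hdet]
  refine integral_congr_ae (.of_forall fun w => ?_)
  dsimp only
  rw [add_sub_cancel_left, ContinuousLinearMap.mul_apply', anisoDil_anisoScale_pow_mul,
    abs_of_pos (by positivity), smul_eq_mul, smul_eq_mul, mul_assoc,
    inv_mul_cancel_left₀ (by positivity)]

/-- The operator `φ ↦ ǩ_j * φ` on the Schwartz space, so that `⟨k_j * u, φ⟩` is
`u (reflectedConvolution a k₀ k j φ)`. -/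
def reflectedConvolution (a : Fin m → ℝ) (k₀ k : 𝓢(Fin m → ℝ, ℝ)) (j : ℕ) :
    𝓢(Fin m → ℝ, ℝ) →L[ℝ] 𝓢(Fin m → ℝ, ℝ) :=
  dilatedAverageCLM volume (if j = 0 then k₀ else k)
    (ContinuousLinearMap.mul ℝ (Fin m → ℝ) (anisoScale a ^ j))

theorem reflectedConvolution_apply (a : Fin m → ℝ) (k₀ k : 𝓢(Fin m → ℝ, ℝ)) (j : ℕ)
    (φ : 𝓢(Fin m → ℝ, ℝ)) (x : Fin m → ℝ) :
    reflectedConvolution a k₀ k j φ x = ∫ y, anisoDil a k₀ k j (y - x) * φ y := by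
  rw [integral_anisoDil_sub_mul, reflectedConvolution, dilatedAverageCLM_apply,
    apply_ite DFunLike.coe]

theorem exists_seminorm_abs_apply_reflectedConvolution_le {a : Fin m → ℝ} (ha : ∀ i, 0 < a i)
    (k₀ : 𝓢(Fin m → ℝ, ℝ)) {k : 𝓢(Fin m → ℝ, ℝ)} (hk : ∫ x, k x = 0)
    (u : 𝓢(Fin m → ℝ, ℝ) →L[ℝ] ℝ) :
    ∃ p : Seminorm ℝ 𝓢(Fin m → ℝ, ℝ), Continuous p ∧ ∀ j φ,
      |u (reflectedConvolution a k₀ k j φ)| ≤ ‖anisoScale a‖ ^ j * p φ := by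
  let q (v : 𝓢(Fin m → ℝ, ℝ) →L[ℝ] ℝ) : Seminorm ℝ 𝓢(Fin m → ℝ, ℝ) :=
    (normSeminorm ℝ ℝ).comp v.toLinearMap
  have hq (v) : Continuous (q v) := continuous_norm.comp v.continuous
  obtain ⟨p, hp, hpδ⟩ := exists_continuous_seminorm_dilatedAverageCLM_le (μ := volume) k hk (hq u)
  let q₀ := q (u ∘L reflectedConvolution a k₀ k 0)
  refine ⟨q₀ + p, (hq _).add hp, fun j φ => ?_⟩
  rcases eq_or_ne j 0 with rfl | hj
  · rw [pow_zero, one_mul]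
    exact le_add_of_nonneg_right (apply_nonneg p φ)
  · have hδ : ‖ContinuousLinearMap.mul ℝ (Fin m → ℝ) (anisoScale a ^ j)‖ ≤ ‖anisoScale a‖ ^ j :=
      (ContinuousLinearMap.opNorm_mul_apply_le ℝ _ _).trans
        (norm_pow_le' _ (Nat.pos_of_ne_zero hj))
    have hδ₁ := hδ.trans (pow_le_one₀ (norm_nonneg _) (norm_anisoScale_lt_one ha).le)
    rw [reflectedConvolution, if_neg hj]
    refine (hpδ _ hδ₁ φ).trans ?_
    gcongr
    exact le_add_of_nonneg_left (apply_nonneg q₀ φ)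

theorem VanishingMoments.integral_eq_zero {θ : (Fin m → ℝ) → ℝ} (hθ : VanishingMoments θ) :
    ∫ x, θ x = 0 := by
  simpa using hθ 0

end AnisotropicDilation

theorem exists_continuousLinearMap_hasSum {ι 𝕜 V G : Type*} [NormedField 𝕜] [AddCommGroup V]
    [Module 𝕜 V] [TopologicalSpace V] [IsTopologicalAddGroup V] [NormedAddCommGroup G]
    [NormedSpace 𝕜 G] [CompleteSpace G] {T : ι → V →L[𝕜] G} {p : Seminorm 𝕜 V}
    (hp : Continuous p) {b : ι → ℝ} (hb : Summable b) (hT : ∀ j v, ‖T j v‖ ≤ b j * p v) :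
    ∃ S : V →L[𝕜] G, ∀ v, HasSum (fun j => T j v) (S v) := by
  have hbp (v : V) : Summable fun j => b j * p v := hb.mul_right (p v)
  have hsum (v : V) : Summable fun j => T j v := .of_norm_bounded (hbp v) (hT · v)
  let S : V →ₗ[𝕜] G :=
    { toFun v := ∑' j, T j v
      map_add' v w := by simpa only [map_add] using (hsum v).tsum_add (hsum w)
      map_smul' c v := by simpa only [map_smul, RingHom.id_apply] using (hsum v).tsum_const_smul c }
  have hSp (v : V) : ‖S v‖ ≤ (∑' j, b j) * p v :=
    (tsum_of_norm_bounded (hbp v).hasSum (hT · v)).trans_eq tsum_mul_right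
  have hS : ContinuousAt S 0 := by
    rw [ContinuousAt, map_zero]
    exact squeeze_zero_norm hSp ((continuous_const.mul hp).tendsto' 0 0 (by simp))
  exact ⟨⟨S, continuous_of_continuousAt_zero S hS⟩, fun v => (hsum v).hasSum⟩

theorem Q_operator_wellDefined_general {m : ℕ} {a : Fin m → ℝ} (ha : ∀ i, 0 < a i) (at_ : ℝ)
    (k₀ : 𝓢(Fin m → ℝ, ℝ)) {k : 𝓢(Fin m → ℝ, ℝ)} (hk : ∫ x, k x = 0)
    {η : BoundedContinuousFunction ℝ ℝ} (hη : η 0 = 1) {u : 𝓢(Fin m → ℝ, ℝ) →L[ℝ] ℝ}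
    (hrep : ∀ (θ : 𝓢(Fin m → ℝ, ℝ)) (c : ℕ → 𝓢(Fin m → ℝ, ℝ)),
      (∀ j x, c j x = ∫ y, anisoDil a k₀ k j (y - x) * θ y) →
      Tendsto (fun N => ∑ j ∈ Finset.range N, u (c j)) atTop (𝓝 (u θ))) :
    ∃ Q : ℝ → 𝓢(Fin m → ℝ, ℝ) →L[ℝ] ℝ,
      (∀ (φ : 𝓢(Fin m → ℝ, ℝ)) (c : ℕ → 𝓢(Fin m → ℝ, ℝ)),
        (∀ j x, c j x = ∫ y, anisoDil a k₀ k j (y - x) * φ y) →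
        TendstoUniformly
          (fun N (t : ℝ) => ∑ j ∈ Finset.range N, |η ((2 : ℝ) ^ ((j : ℝ) * at_) * t) * u (c j)|)
          (fun t => ∑' j : ℕ, |η ((2 : ℝ) ^ ((j : ℝ) * at_) * t) * u (c j)|) atTop ∧
        ∀ t, HasSum (fun j : ℕ => η ((2 : ℝ) ^ ((j : ℝ) * at_) * t) * u (c j)) (Q t φ)) ∧
      (∀ φ, Continuous fun t => Q t φ) ∧
      (∀ φ, ∃ C : ℝ, ∀ t, |Q t φ| ≤ C) ∧
      Q 0 = u := by
  obtain ⟨p, hp, hu⟩ := exists_seminorm_abs_apply_reflectedConvolution_le ha k₀ hk u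
  set T := reflectedConvolution a k₀ k
  have hb : Summable fun j : ℕ => ‖η‖ * ‖anisoScale a‖ ^ j :=
    (summable_geometric_of_lt_one (norm_nonneg _) (norm_anisoScale_lt_one ha)).mul_left ‖η‖
  have hbound (t : ℝ) (j : ℕ) (φ) : ‖η ((2 : ℝ) ^ ((j : ℝ) * at_) * t) * u (T j φ)‖ ≤
      ‖η‖ * ‖anisoScale a‖ ^ j * p φ := by
    rw [norm_mul, mul_assoc]
    exact mul_le_mul (η.norm_coe_le_norm _) (hu j φ) (norm_nonneg _) (norm_nonneg _)
  choose Q hQ using fun t : ℝ => exists_continuousLinearMap_hasSum hp hb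
    (T := fun j : ℕ => η ((2 : ℝ) ^ ((j : ℝ) * at_) * t) • (u ∘L T j)) (hbound t)
  refine ⟨Q, fun φ c hc => ?_, fun φ => ?_, fun φ => ⟨_, fun t =>
    (hQ t φ).norm_le_of_bounded (hb.mul_right (p φ)).hasSum (hbound t · φ)⟩, ?_⟩
  · obtain rfl : c = (T · φ) := by
      ext j x
      rw [hc, reflectedConvolution_apply]
    refine ⟨tendstoUniformly_tsum_nat (hb.mul_right (p φ)) fun j t => ?_, (hQ · φ)⟩
    simpa only [Real.norm_eq_abs, abs_abs] using hbound t j φ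
  · simp only [← fun t => (hQ t φ).tsum_eq]
    exact continuous_tsum (fun j => by fun_prop) (hb.mul_right (p φ)) fun j t => hbound t j φ
  · ext φ
    refine tendsto_nhds_unique (hQ 0 φ).tendsto_sum_nat ?_
    simpa [hη] using hrep φ (T · φ) fun j x => reflectedConvolution_apply a k₀ k j φ x

/-- With kernels `k₀, k ∈ 𝓢(ℝⁿ)` supported in `{xₙ ≥ 0}`, `k` with
vanishing moments of all orders, the reproducing formula `Σ_j k_j * u = u`, and
`η ∈ 𝓢(ℝ)` with `η(0) = 1`, the operator
`⟨Qu(·,t), φ⟩ = Σ_j η(2^{j a_t} t)·⟨k_j * u, φ⟩` is well defined: for every `φ ∈ 𝓢(ℝⁿ)`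
the series converges absolutely, uniformly in `t`; each `Qu(·,t)` is a tempered
distribution; `t ↦ Qu(·,t)` is weak*-continuous and bounded; and `Qu(·,0) = u`. -/
theorem Q_operator_wellDefined (n : ℕ) (a : Fin (n+1) → ℝ) (ha : ∀ i, 1 ≤ a i)
    (at_ : ℝ) (hat : 1 ≤ at_)
    (k₀ k : SchwartzMap (Fin (n+1) → ℝ) ℝ)
    (hk₀s : tsupport ⇑k₀ ⊆ {x : Fin (n+1) → ℝ | 0 ≤ x (Fin.last n)})
    (hks : tsupport ⇑k ⊆ {x : Fin (n+1) → ℝ | 0 ≤ x (Fin.last n)})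
    (hkm : VanishingMoments ⇑k)
    -- reproducing formula `Σ_j k_j * u = u` in `𝓢'(ℝⁿ)` for every `u ∈ 𝓢'(ℝⁿ)`
    (hrep : ∀ (v : SchwartzMap (Fin (n+1) → ℝ) ℝ →L[ℝ] ℝ)
        (θ : SchwartzMap (Fin (n+1) → ℝ) ℝ)
        (c : ℕ → SchwartzMap (Fin (n+1) → ℝ) ℝ),
        (∀ (j : ℕ) (x : Fin (n+1) → ℝ),
          c j x = ∫ y : Fin (n+1) → ℝ, anisoDil a ⇑k₀ ⇑k j (y - x) * θ y) →
        Tendsto (fun N => ∑ j ∈ Finset.range N, v (c j)) atTop (nhds (v θ)))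
    (η : SchwartzMap ℝ ℝ) (hη : η 0 = 1)
    (u : SchwartzMap (Fin (n+1) → ℝ) ℝ →L[ℝ] ℝ) :
    ∃ Q : ℝ → (SchwartzMap (Fin (n+1) → ℝ) ℝ →L[ℝ] ℝ),
      (∀ (φ : SchwartzMap (Fin (n+1) → ℝ) ℝ)
         (c : ℕ → SchwartzMap (Fin (n+1) → ℝ) ℝ),
        -- `c j` is the Schwartz function `ǩ_j * φ`, so that `⟨k_j * u, φ⟩ = ⟨u, c j⟩`
        (∀ (j : ℕ) (x : Fin (n+1) → ℝ),
          c j x = ∫ y : Fin (n+1) → ℝ, anisoDil a ⇑k₀ ⇑k j (y - x) * φ y) →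
        -- absolute convergence, uniformly in `t`
        TendstoUniformly
          (fun N (t : ℝ) => ∑ j ∈ Finset.range N,
            |η ((2:ℝ) ^ ((j:ℝ) * at_) * t) * u (c j)|)
          (fun t => ∑' j : ℕ, |η ((2:ℝ) ^ ((j:ℝ) * at_) * t) * u (c j)|) atTop ∧
        -- and the sum is `⟨Qu(·,t), φ⟩`
        ∀ t : ℝ, HasSum (fun j : ℕ => η ((2:ℝ) ^ ((j:ℝ) * at_) * t) * u (c j)) (Q t φ)) ∧
      (∀ φ : SchwartzMap (Fin (n+1) → ℝ) ℝ, Continuous fun t => Q t φ) ∧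
      (∀ φ : SchwartzMap (Fin (n+1) → ℝ) ℝ, ∃ C : ℝ, ∀ t : ℝ, |Q t φ| ≤ C) ∧
      Q 0 = u :=
  Q_operator_wellDefined_general (fun i => one_pos.trans_le (ha i)) at_ k₀ hkm.integral_eq_zero
    (η := η.toBoundedContinuousFunction) hη (hrep u)

end
end

section
/- Let p₁,…,pₙ, r ∈ (0,∞), q ∈ (0,∞], a > 0, and let N > 0 satisfy N·r > 1. Let f : ℝ → ℂ be continuous with sup_{t∈ℝ} (1+|t|)^N·|f(t)| < ∞. Then there exists a constant c (depending on n, p₁,…,pₙ, r, q, a, N and f) such that for every sequence (v_j)_{j≥0} of measurable functions v_j : ℝⁿ → ℂ, the inequality ‖ { (x,t) ↦ v_j(x)·2^{ja/r}·f(2^{ja}t) }_{j≥0} ‖_{L_{(p₁,…,pₙ,r)}(ℓ_q)(ℝⁿ×ℝ)} ≤ c·( Σ_{j=0}^∞ ‖v_j‖_{L_{(p₁,…,pₙ)}(ℝⁿ)}^r )^{1/r} holds. -/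
open MeasureTheory Filter Topology ENNReal

noncomputable section

/-- The mixed Lebesgue (quasi-)norm `‖F‖_{L_{(p₁,…,pₘ)}}` of a nonnegative function on `ℝᵐ`,
integrating first in the first coordinate and last in the last coordinate. -/
def mixedLpNorm : (m : ℕ) → (Fin m → ℝ) → ((Fin m → ℝ) → ℝ≥0∞) → ℝ≥0∞
  | 0, _, F => F Fin.elim0
  | m + 1, p, F =>
      (∫⁻ s : ℝ,
        (mixedLpNorm m (fun i => p i.castSucc) fun x => F (Fin.snoc x s)) ^ p (Fin.last m))
        ^ (1 / p (Fin.last m))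

/-- The `ℓ_q`-norm of a sequence in `[0,∞]` (supremum when `q = ∞`). -/
def lqNorm (q : ℝ≥0∞) (h : ℕ → ℝ≥0∞) : ℝ≥0∞ :=
  if q = ⊤ then ⨆ j, h j else (∑' j, h j ^ q.toReal) ^ (1 / q.toReal)

/-! Choose `s ≤ min (p₁, …, pₙ, q, r)`. The `ℓ_q`-norm is at most the `ℓ_s`-norm, and the mixed
norm satisfies the `s`-triangle inequality, so with `V_j := ‖v_j‖` the left-hand side is at most
`∫ (∑_j (V_j 2^{ja/r} |f(2^{ja} t)|)^s)^{r/s} dt`. Since `|f(t)| ≲ (1 + |t|)^{-N}`, extracting the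
factor `|t|^{-1/r}` from every weight leaves the dilates `k(2^{ja} t)` of the single kernel
`k(t) = (|t|^{1/r} (1 + |t|)^{-N})^s` and turns `dt` into the dilation-invariant measure `dt/|t|`.

The exponent `r/s` is at least `1`, so Schur's test bounds the result by a multiple of `∑_j V_j^r`
as soon as `sup_{t ≠ 0} ∑_{j ∈ ℤ} k(2^{ja} t)` and `∫ k(t) dt/|t|` are finite. The supremum is
controlled by two geometric series because `0 < 1/r < N`; the integral is then finite as well,
since it unfolds to the integral of such a sum over a single shell `1 ≤ |t| < λ`. -/

section Series

variable {ι : Type*}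

theorem tsum_rpow_le_rpow_tsum {κ : ℝ} (hκ : 1 ≤ κ) (x : ι → ℝ≥0∞) :
    ∑' j, x j ^ κ ≤ (∑' j, x j) ^ κ := by
  have rpow_eq_mul_rpow_sub_one (y : ℝ≥0∞) : y ^ κ = y * y ^ (κ - 1) := by
    conv_lhs => rw [← add_sub_cancel 1 κ,
      ENNReal.rpow_add_of_nonneg _ _ zero_le_one (by linarith), ENNReal.rpow_one]
  simp_rw [rpow_eq_mul_rpow_sub_one, ← ENNReal.tsum_mul_right]
  refine ENNReal.tsum_le_tsum fun j => ?_
  gcongr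
  exact ENNReal.le_tsum j

theorem rpow_tsum_mul_le {ρ : ℝ} (hρ : 1 ≤ ρ) (w x : ι → ℝ≥0∞) :
    (∑' j, w j * x j) ^ ρ ≤ (∑' j, w j) ^ (ρ - 1) * ∑' j, w j * x j ^ ρ := by
  have hρ0 : 0 < ρ := by linarith
  have hölder : ∑' j, w j * x j ≤ (∑' j, w j) ^ (1 - ρ⁻¹) * (∑' j, w j * x j ^ ρ) ^ ρ⁻¹ := by
    rw [ENNReal.tsum_eq_iSup_sum]
    refine iSup_le fun t => (ENNReal.inner_le_weight_mul_Lp_of_nonneg t hρ w x).trans ?_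
    gcongr
    · exact sub_nonneg.2 (inv_le_one_of_one_le₀ hρ)
    · exact ENNReal.sum_le_tsum t
    · exact ENNReal.sum_le_tsum t
  refine (ENNReal.rpow_le_rpow hölder hρ0.le).trans_eq ?_
  rw [ENNReal.mul_rpow_of_nonneg _ _ hρ0.le, ← ENNReal.rpow_mul, ← ENNReal.rpow_mul,
    inv_mul_cancel₀ hρ0.ne', ENNReal.rpow_one, sub_mul, one_mul, inv_mul_cancel₀ hρ0.ne']

theorem lqNorm_le_rpow_tsum {q : ℝ≥0∞} {s : ℝ} (hs : 0 < s) (hsq : ENNReal.ofReal s ≤ q)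
    (h : ℕ → ℝ≥0∞) : lqNorm q h ≤ (∑' j, h j ^ s) ^ (1 / s) := by
  unfold lqNorm
  split_ifs with hq
  · refine iSup_le fun j => ?_
    rw [one_div, ENNReal.le_rpow_inv_iff hs]
    exact ENNReal.le_tsum j
  · have hsQ : s ≤ q.toReal := (ENNReal.ofReal_le_iff_le_toReal hq).1 hsq
    have hQ : 0 < q.toReal := hs.trans_le hsQ
    rw [one_div, one_div, ENNReal.rpow_inv_le_iff hQ, ← ENNReal.rpow_mul, inv_mul_eq_div]
    calc ∑' j, h j ^ q.toReal
        = ∑' j, (h j ^ s) ^ (q.toReal / s) := by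
          simp_rw [← ENNReal.rpow_mul, mul_div_cancel₀ q.toReal hs.ne']
      _ ≤ (∑' j, h j ^ s) ^ (q.toReal / s) := tsum_rpow_le_rpow_tsum ((one_le_div hs).2 hsQ) _

end Series

section Integrals

variable {ι α : Type*} [MeasurableSpace α] {μ : Measure α}

theorem lintegral_rpow_finset_sum_le {p : ℝ} (hp : 1 ≤ p) {g : ι → α → ℝ≥0∞}
    (hg : ∀ j, AEMeasurable (g j) μ) (S : Finset ι) :
    (∫⁻ a, (∑ j ∈ S, g j a) ^ p ∂μ) ^ (1 / p) ≤ ∑ j ∈ S, (∫⁻ a, g j a ^ p ∂μ) ^ (1 / p) := by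
  have hp0 : 0 < p := by linarith
  classical
  induction S using Finset.induction_on with
  | empty => simp [hp0]
  | insert j S hj ih =>
    simp_rw [Finset.sum_insert hj]
    exact (ENNReal.lintegral_Lp_add_le (hg j)
      (Finset.aemeasurable_fun_sum _ fun i _ => hg i) hp).trans (add_le_add_right ih _)

theorem lintegral_rpow_tsum_le [Countable ι] {p : ℝ} (hp : 1 ≤ p) {g : ι → α → ℝ≥0∞}
    (hg : ∀ j, AEMeasurable (g j) μ) :
    (∫⁻ a, (∑' j, g j a) ^ p ∂μ) ^ (1 / p) ≤ ∑' j, (∫⁻ a, g j a ^ p ∂μ) ^ (1 / p) := by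
  have hp0 : 0 < p := by linarith
  have rpow_tsum_eq_iSup (a : α) :
      (∑' j, g j a) ^ p = ⨆ S : Finset ι, (∑ j ∈ S, g j a) ^ p := by
    rw [ENNReal.tsum_eq_iSup_sum]
    exact (ENNReal.orderIsoRpow p hp0).map_iSup _
  have sum_rpow_mono (a : α) : Monotone fun S : Finset ι => (∑ j ∈ S, g j a) ^ p :=
    fun _ _ hST => ENNReal.rpow_le_rpow (Finset.sum_le_sum_of_subset hST) hp0.le
  simp_rw [rpow_tsum_eq_iSup]
  rw [lintegral_iSup_directed
      (fun S => (Finset.aemeasurable_fun_sum S fun j _ => hg j).pow_const p)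
      (Monotone.directed_le fun _ _ hST a => sum_rpow_mono a hST),
    one_div, ENNReal.rpow_inv_le_iff hp0, ← one_div]
  refine iSup_le fun S => ?_
  rw [← ENNReal.rpow_inv_le_iff hp0, ← one_div]
  exact (lintegral_rpow_finset_sum_le hp hg S).trans (ENNReal.sum_le_tsum S)

theorem lintegral_rpow_tsum_mul_le [Countable ι] {ρ : ℝ} (hρ : 1 ≤ ρ) {K : ι → α → ℝ≥0∞}
    (hK : ∀ j, AEMeasurable (K j) μ) {B D : ℝ≥0∞} (hB : ∀ᵐ t ∂μ, ∑' j, K j t ≤ B)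
    (hD : ∀ j, ∫⁻ t, K j t ∂μ ≤ D) (A : ι → ℝ≥0∞) :
    ∫⁻ t, (∑' j, K j t * A j) ^ ρ ∂μ ≤ B ^ (ρ - 1) * D * ∑' j, A j ^ ρ := by
  have hKA (j : ι) : AEMeasurable (fun t => K j t * A j ^ ρ) μ := (hK j).mul_const _
  calc ∫⁻ t, (∑' j, K j t * A j) ^ ρ ∂μ
      ≤ ∫⁻ t, B ^ (ρ - 1) * ∑' j, K j t * A j ^ ρ ∂μ := by
        refine lintegral_mono_ae (hB.mono fun t ht => (rpow_tsum_mul_le hρ _ _).trans ?_)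
        gcongr
    _ = B ^ (ρ - 1) * ∑' j, (∫⁻ t, K j t ∂μ) * A j ^ ρ := by
        rw [lintegral_const_mul'' _ (AEMeasurable.tsum hKA), lintegral_tsum hKA]
        simp_rw [lintegral_mul_const'' _ (hK _)]
    _ ≤ B ^ (ρ - 1) * (D * ∑' j, A j ^ ρ) := by
        rw [← ENNReal.tsum_mul_left (a := D)]
        gcongr with j
        exact hD j
    _ = B ^ (ρ - 1) * D * ∑' j, A j ^ ρ := (mul_assoc _ _ _).symm

end Integrals

section MixedNorm

variable {m : ℕ} {p : Fin m → ℝ}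

theorem mixedLpNorm_mono (hp : ∀ i, 0 < p i) {F G : (Fin m → ℝ) → ℝ≥0∞}
    (h : ∀ x, F x ≤ G x) : mixedLpNorm m p F ≤ mixedLpNorm m p G := by
  induction m with
  | zero => exact h _
  | succ m ih =>
    have hlast := hp (Fin.last m)
    refine ENNReal.rpow_le_rpow (lintegral_mono fun s => ENNReal.rpow_le_rpow ?_ hlast.le)
      (by positivity)
    exact ih (fun i => hp i.castSucc) fun x => h _

theorem mixedLpNorm_mul_const (hp : ∀ i, 0 < p i) {c : ℝ≥0∞} (hc : c ≠ ⊤)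
    (F : (Fin m → ℝ) → ℝ≥0∞) :
    mixedLpNorm m p (fun x => F x * c) = mixedLpNorm m p F * c := by
  induction m with
  | zero => rfl
  | succ m ih =>
    have hlast := hp (Fin.last m)
    simp only [mixedLpNorm]
    simp_rw [ih (fun i => hp i.castSucc), ENNReal.mul_rpow_of_nonneg _ _ hlast.le]
    rw [lintegral_mul_const' _ _ (ENNReal.rpow_ne_top_of_nonneg hlast.le hc),
      ENNReal.mul_rpow_of_nonneg _ _ (by positivity), one_div, ENNReal.rpow_rpow_inv hlast.ne']

theorem measurable_finSnoc {S : Type*} [MeasurableSpace S] {g : S → Fin m → ℝ} {h : S → ℝ}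
    (hg : Measurable g) (hh : Measurable h) :
    Measurable fun z => (Fin.snoc (g z) (h z) : Fin (m + 1) → ℝ) := by
  refine measurable_pi_lambda _ fun i => Fin.lastCases ?_ (fun i => ?_) i
  · simpa only [Fin.snoc_last] using hh
  · simp only [Fin.snoc_castSucc]
    fun_prop

theorem measurable_mixedLpNorm {S : Type*} [MeasurableSpace S] (p : Fin m → ℝ)
    {F : S → (Fin m → ℝ) → ℝ≥0∞} (hF : Measurable (Function.uncurry F)) :
    Measurable fun s => mixedLpNorm m p (F s) := by
  induction m generalizing S with
  | zero => exact hF.comp (measurable_id.prodMk measurable_const)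
  | succ m ih =>
    have hslice : Measurable fun z : S × ℝ =>
        mixedLpNorm m (fun i => p i.castSucc) fun x => F z.1 (Fin.snoc x z.2) :=
      ih _ (hF.comp ((by fun_prop : Measurable fun w : (S × ℝ) × (Fin m → ℝ) => w.1.1).prodMk
        (measurable_finSnoc measurable_snd (by fun_prop))))
    exact ((hslice.pow_const (p (Fin.last m))).lintegral_prod_right').pow_const _

/-- Raising to the power `s` reduces every integration to Minkowski's inequality with exponent
`p i / s ≥ 1`. -/
theorem mixedLpNorm_rpow_tsum_le {ι : Type*} [Countable ι] {s : ℝ} (hs : 0 < s)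
    (hp : ∀ i, s ≤ p i) {G : ι → (Fin m → ℝ) → ℝ≥0∞} (hG : ∀ j, Measurable (G j)) :
    mixedLpNorm m p (fun x => (∑' j, G j x ^ s) ^ (1 / s)) ≤
      (∑' j, mixedLpNorm m p (G j) ^ s) ^ (1 / s) := by
  induction m with
  | zero => exact le_rfl
  | succ m ih =>
    have hlast : s ≤ p (Fin.last m) := hp _
    have hlast0 : 0 < p (Fin.last m) := hs.trans_le hlast
    simp only [mixedLpNorm]
    set P := p (Fin.last m)
    set H : ι → ℝ → ℝ≥0∞ := fun j y =>
      mixedLpNorm m (fun i => p i.castSucc) fun x => G j (Fin.snoc x y)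
    have hH (j : ι) : Measurable (H j) := measurable_mixedLpNorm _
      (F := fun y x => G j (Fin.snoc x y))
      ((hG j).comp (measurable_finSnoc measurable_snd measurable_fst))
    calc (∫⁻ y, (mixedLpNorm m (fun i => p i.castSucc) fun x =>
            (∑' j, G j (Fin.snoc x y) ^ s) ^ (1 / s)) ^ P) ^ (1 / P)
        ≤ (∫⁻ y, (∑' j, H j y ^ s) ^ (P / s)) ^ (1 / P) := by
          gcongr with y
          rw [← one_div_mul_eq_div s P, ENNReal.rpow_mul]
          refine ENNReal.rpow_le_rpow ?_ hlast0.le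
          exact ih (fun i => hp i.castSucc) fun j =>
            (hG j).comp (measurable_finSnoc measurable_id measurable_const)
      _ = ((∫⁻ y, (∑' j, H j y ^ s) ^ (P / s)) ^ (1 / (P / s))) ^ (1 / s) := by
          rw [← ENNReal.rpow_mul]
          congr 1
          field_simp
      _ ≤ (∑' j, (∫⁻ y, (H j y ^ s) ^ (P / s)) ^ (1 / (P / s))) ^ (1 / s) := by
          gcongr
          exact lintegral_rpow_tsum_le ((one_le_div hs).2 hlast)
            fun j => ((hH j).pow_const s).aemeasurable
      _ = (∑' j, ((∫⁻ y, H j y ^ P) ^ (1 / P)) ^ s) ^ (1 / s) := by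
          simp_rw [← ENNReal.rpow_mul, mul_div_cancel₀ P hs.ne', one_div_div, one_div_mul_eq_div]

theorem mixedLpNorm_lqNorm_mul_const_le {q : ℝ≥0∞} {s : ℝ} (hs : 0 < s) (hsp : ∀ i, s ≤ p i)
    (hsq : ENNReal.ofReal s ≤ q) {G : ℕ → (Fin m → ℝ) → ℝ≥0∞} (hG : ∀ j, Measurable (G j))
    {c : ℕ → ℝ≥0∞} (hc : ∀ j, c j ≠ ⊤) :
    mixedLpNorm m p (fun x => lqNorm q fun j => G j x * c j) ≤
      (∑' j, (mixedLpNorm m p (G j) * c j) ^ s) ^ (1 / s) := by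
  have hp (i : Fin m) : 0 < p i := hs.trans_le (hsp i)
  refine (mixedLpNorm_mono hp fun x => lqNorm_le_rpow_tsum hs hsq _).trans
    ((mixedLpNorm_rpow_tsum_le hs hsp fun j => (hG j).mul_const (c j)).trans_eq ?_)
  simp_rw [mixedLpNorm_mul_const hp (hc _)]

end MixedNorm

section MultiplicativeHaar

/-- The dilation-invariant measure `dt/|t|` on `ℝ`, that is, the Haar measure of the
multiplicative group `ℝ ∖ {0}`. At `t = 0` the density takes the value `∞`, on a null set. -/
def realMulHaar : Measure ℝ := volume.withDensity fun t => ‖t‖ₑ⁻¹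

theorem ae_realMulHaar_ne_zero : ∀ᵐ t ∂realMulHaar, t ≠ 0 :=
  (withDensity_absolutelyContinuous _ _).ae_le (Measure.ae_ne volume 0)

theorem lintegral_realMulHaar (k : ℝ → ℝ≥0∞) :
    ∫⁻ t, k t ∂realMulHaar = ∫⁻ t, ‖t‖ₑ⁻¹ * k t := by
  refine lintegral_withDensity_eq_lintegral_mul_non_measurable _ (by fun_prop) ?_ k
  filter_upwards [Measure.ae_ne volume (0 : ℝ)] with t ht
  simpa using ht

theorem lintegral_realMulHaar_comp_mul_left {c : ℝ} (hc : c ≠ 0) {k : ℝ → ℝ≥0∞}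
    (hk : Measurable k) :
    ∫⁻ t, k (c * t) ∂realMulHaar = ∫⁻ t, k t ∂realMulHaar := by
  simp_rw [lintegral_realMulHaar]
  conv_rhs => rw [← Real.smul_map_volume_mul_left hc, lintegral_smul_measure,
    lintegral_map (by fun_prop) (measurable_const_mul c), smul_eq_mul,
    ← lintegral_const_mul _ (by fun_prop), ← Real.enorm_eq_ofReal_abs]
  refine lintegral_congr fun t => ?_
  rw [enorm_mul, ENNReal.mul_inv (.inr enorm_ne_top) (.inl enorm_ne_top), mul_assoc, ← mul_assoc,
    ENNReal.mul_inv_cancel (enorm_ne_zero.2 hc) enorm_ne_top, one_mul]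

theorem realMulHaar_shell_ne_top (lam : ℝ) :
    realMulHaar (abs ⁻¹' Set.Ico 1 lam) ≠ ⊤ := by
  have hS : MeasurableSet (abs ⁻¹' Set.Ico (1 : ℝ) lam) := measurableSet_Ico.preimage measurable_abs
  refine ne_top_of_le_ne_top (measure_ball_lt_top (μ := volume) (x := (0 : ℝ)) (r := lam)).ne ?_
  calc realMulHaar (abs ⁻¹' Set.Ico 1 lam)
      = ∫⁻ t in (abs ⁻¹' Set.Ico 1 lam), ‖t‖ₑ⁻¹ := withDensity_apply _ hS
    _ ≤ ∫⁻ _ in (abs ⁻¹' Set.Ico (1 : ℝ) lam), 1 := by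
        refine setLIntegral_mono' hS fun t ht => ENNReal.inv_le_one.2 ?_
        rw [Real.enorm_eq_ofReal_abs]
        exact ENNReal.one_le_ofReal.2 ht.1
    _ ≤ volume (Metric.ball (0 : ℝ) lam) := by
        rw [setLIntegral_one]
        exact measure_mono fun t ht => by simpa using ht.2

theorem exists_zpow_mul_mem_shell {lam : ℝ} (hlam : 1 < lam) {t : ℝ} (ht : t ≠ 0) :
    ∃ j : ℤ, |lam ^ j * t| ∈ Set.Ico 1 lam := by
  have hlam0 : 0 < lam := one_pos.trans hlam
  obtain ⟨k, hk, hk'⟩ := exists_mem_Ico_zpow (abs_pos.2 ht) hlam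
  refine ⟨-k, ?_⟩
  rw [abs_mul, abs_of_pos (zpow_pos hlam0 _), zpow_neg, inv_mul_eq_div]
  rw [zpow_add_one₀ hlam0.ne'] at hk'
  exact ⟨(one_le_div (zpow_pos hlam0 k)).2 hk, (div_lt_iff₀' (zpow_pos hlam0 k)).2 hk'⟩

/-- The shell `1 ≤ |t| < lam` is a fundamental domain for dilation by powers of `lam`, so the
integral of `k` unfolds to the integral over the shell of the sum of its dilates. -/
theorem lintegral_realMulHaar_le_of_tsum_dilate_le {lam : ℝ} (hlam : 1 < lam) {k : ℝ → ℝ≥0∞}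
    (hk : Measurable k) {C : ℝ≥0∞} (hC : ∀ t, t ≠ 0 → ∑' j : ℤ, k (lam ^ j * t) ≤ C) :
    ∫⁻ t, k t ∂realMulHaar ≤ C * realMulHaar (abs ⁻¹' Set.Ico 1 lam) := by
  have hlam0 : lam ≠ 0 := (one_pos.trans hlam).ne'
  set χ : ℝ → ℝ≥0∞ := (abs ⁻¹' Set.Ico 1 lam).indicator 1
  have hS : MeasurableSet (abs ⁻¹' Set.Ico (1 : ℝ) lam) := measurableSet_Ico.preimage measurable_abs
  have hχ : Measurable χ := measurable_one.indicator hS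
  calc ∫⁻ t, k t ∂realMulHaar
      ≤ ∫⁻ t, ∑' j : ℤ, χ (lam ^ j * t) * k t ∂realMulHaar := by
        refine lintegral_mono_ae (ae_realMulHaar_ne_zero.mono fun t ht => ?_)
        obtain ⟨j, hj⟩ := exists_zpow_mul_mem_shell hlam ht
        calc k t = χ (lam ^ j * t) * k t := by
              simp only [χ, Set.indicator_of_mem (Set.mem_preimage.2 hj), Pi.one_apply, one_mul]
          _ ≤ ∑' j : ℤ, χ (lam ^ j * t) * k t := ENNReal.le_tsum j
    _ = ∑' j : ℤ, ∫⁻ t, χ (lam ^ j * t) * k t ∂realMulHaar :=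
        lintegral_tsum fun j => by fun_prop
    _ = ∑' j : ℤ, ∫⁻ t, χ t * k (lam ^ (-j) * t) ∂realMulHaar := by
        refine tsum_congr fun j => ?_
        rw [← lintegral_realMulHaar_comp_mul_left (zpow_ne_zero j hlam0)
          (k := fun t => χ t * k (lam ^ (-j) * t)) (by fun_prop)]
        simp_rw [zpow_neg, inv_mul_cancel_left₀ (zpow_ne_zero j hlam0)]
    _ = ∫⁻ t, χ t * ∑' j : ℤ, k (lam ^ j * t) ∂realMulHaar := by
        rw [← lintegral_tsum fun j => by fun_prop]
        simp_rw [ENNReal.tsum_mul_left]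
        exact lintegral_congr fun t =>
          congrArg _ ((Equiv.neg ℤ).tsum_eq fun j : ℤ => k (lam ^ j * t))
    _ ≤ ∫⁻ t, χ t * C ∂realMulHaar :=
        lintegral_mono_ae (ae_realMulHaar_ne_zero.mono fun t ht => by gcongr; exact hC t ht)
    _ = C * realMulHaar (abs ⁻¹' Set.Ico 1 lam) := by
        rw [lintegral_mul_const _ hχ, lintegral_indicator_one hS, mul_comm]

end MultiplicativeHaar

/-- The kernel `|t|^σ (1 + |t|)^{-M}` on `ℝ`; for `0 < σ < M` it decays like a power at both ends
`0` and `∞` of the multiplicative group. -/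
def decayBump (σ M t : ℝ) : ℝ≥0∞ := ‖t‖ₑ ^ σ * (1 + ‖t‖ₑ) ^ (-M)

namespace decayBump

variable {σ M : ℝ}

@[fun_prop]
theorem measurable : Measurable (decayBump σ M) := by
  unfold decayBump
  fun_prop

theorem rpow_eq {s : ℝ} (hs : 0 ≤ s) (t : ℝ) :
    decayBump σ M t ^ s = decayBump (σ * s) (M * s) t := by
  simp only [decayBump, ENNReal.mul_rpow_of_nonneg _ _ hs, ← ENNReal.rpow_mul, neg_mul]

theorem le_enorm_rpow (hM : 0 < M) (t : ℝ) : decayBump σ M t ≤ ‖t‖ₑ ^ σ :=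
  mul_le_of_le_one_right' (ENNReal.rpow_le_one_of_one_le_of_neg le_self_add (neg_neg_of_pos hM))

theorem le_enorm_rpow_sub (hM : 0 < M) {t : ℝ} (ht : t ≠ 0) :
    decayBump σ M t ≤ ‖t‖ₑ ^ (σ - M) := by
  rw [sub_eq_add_neg, ENNReal.rpow_add _ _ (enorm_ne_zero.2 ht) enorm_ne_top, decayBump]
  rw [ENNReal.rpow_neg, ENNReal.rpow_neg]
  gcongr
  exact le_add_self

theorem mul_le (hσ : 0 ≤ σ) (hM : 0 ≤ M) {c : ℝ} (hc : 1 ≤ ‖c‖ₑ) (t : ℝ) :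
    decayBump σ M (t * c) ≤ decayBump σ M t * ‖c‖ₑ ^ σ := by
  simp only [decayBump, enorm_mul, ENNReal.mul_rpow_of_nonneg _ _ hσ, ENNReal.rpow_neg]
  rw [mul_right_comm]
  gcongr
  exact le_mul_of_one_le_right' hc

theorem tsum_zpow_ne_top {lam : ℝ} (hlam : 1 < lam) (hσ : 0 < σ) (hM : σ < M) :
    ∑' j : ℤ, decayBump σ M (lam ^ j) ≠ ⊤ := by
  have hlam0 : 0 < lam := one_pos.trans hlam
  have hM0 : 0 < M := hσ.trans hM
  have hlam1 : 1 < ‖lam‖ₑ := by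
    rwa [Real.enorm_of_nonneg hlam0.le, ENNReal.one_lt_ofReal]
  have geometric_ne_top {τ : ℝ} (hτ : τ < 0) : ∑' k : ℕ, (‖lam‖ₑ ^ τ) ^ k ≠ ⊤ :=
    (tsum_geometric_lt_top.2 (ENNReal.rpow_lt_one_of_one_lt_of_neg hlam1 hτ)).ne
  have upper_tail (k : ℕ) : decayBump σ M (lam ^ (k : ℤ)) ≤ (‖lam‖ₑ ^ (σ - M)) ^ k := by
    refine (le_enorm_rpow_sub hM0 (zpow_ne_zero _ hlam0.ne')).trans_eq ?_
    rw [zpow_natCast, enorm_pow, ← ENNReal.rpow_natCast_mul, ← ENNReal.rpow_mul_natCast, mul_comm]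
  have lower_tail (k : ℕ) :
      decayBump σ M (lam ^ (-((k : ℤ) + 1))) ≤ (‖lam‖ₑ ^ (-σ)) ^ (k + 1) := by
    refine (le_enorm_rpow hM0 _).trans_eq ?_
    rw [zpow_neg, enorm_inv (zpow_ne_zero _ hlam0.ne'), ENNReal.inv_rpow, ← ENNReal.rpow_neg,
      ← Nat.cast_succ, zpow_natCast, enorm_pow, ← ENNReal.rpow_natCast_mul,
      ← ENNReal.rpow_mul_natCast, mul_comm]
  rw [tsum_of_nat_of_neg_add_one ENNReal.summable ENNReal.summable, ENNReal.add_ne_top]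
  refine ⟨ne_top_of_le_ne_top (geometric_ne_top (sub_neg.2 hM)) (ENNReal.tsum_le_tsum upper_tail),
    ne_top_of_le_ne_top (geometric_ne_top (neg_neg_of_pos hσ)) ?_⟩
  exact (ENNReal.tsum_le_tsum lower_tail).trans
    (ENNReal.tsum_comp_le_tsum_of_injective (add_left_injective 1) _)

theorem exists_tsum_zpow_mul_le {lam : ℝ} (hlam0 : 0 < lam) (hlam1 : lam ≠ 1) (hσ : 0 < σ)
    (hM : σ < M) :
    ∃ C : ℝ≥0∞, C ≠ ⊤ ∧ ∀ t, t ≠ 0 → ∑' j : ℤ, decayBump σ M (lam ^ j * t) ≤ C := by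
  wlog hlam : 1 < lam generalizing lam
  · obtain ⟨C, hC, hCle⟩ := this (inv_pos.2 hlam0) (inv_ne_one.2 hlam1)
      ((one_lt_inv₀ hlam0).2 (lt_of_le_of_ne (not_lt.1 hlam) hlam1))
    refine ⟨C, hC, fun t ht => ?_⟩
    rw [← (Equiv.neg ℤ).tsum_eq]
    simpa only [Equiv.neg_apply, zpow_neg, inv_zpow] using hCle t ht
  refine ⟨(∑' j : ℤ, decayBump σ M (lam ^ j)) * ‖lam‖ₑ ^ σ,
    ENNReal.mul_ne_top (tsum_zpow_ne_top hlam hσ hM)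
      (ENNReal.rpow_ne_top_of_nonneg hσ.le enorm_ne_top), fun t ht => ?_⟩
  obtain ⟨k, hk, hk'⟩ := exists_zpow_mul_mem_shell hlam ht
  have one_le_enorm : 1 ≤ ‖lam ^ k * t‖ₑ := by
    rwa [Real.enorm_eq_ofReal_abs, ENNReal.one_le_ofReal]
  have enorm_le : ‖lam ^ k * t‖ₑ ≤ ‖lam‖ₑ := by
    rw [Real.enorm_eq_ofReal_abs, Real.enorm_of_nonneg hlam0.le]
    exact ENNReal.ofReal_le_ofReal hk'.le
  calc ∑' j : ℤ, decayBump σ M (lam ^ j * t)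
      = ∑' j : ℤ, decayBump σ M (lam ^ j * (lam ^ k * t)) := by
        rw [← (Equiv.addRight k).tsum_eq]
        simp_rw [Equiv.coe_addRight, zpow_add₀ hlam0.ne', mul_assoc]
    _ ≤ ∑' j : ℤ, decayBump σ M (lam ^ j) * ‖lam‖ₑ ^ σ :=
        ENNReal.tsum_le_tsum fun j => (mul_le hσ.le (hσ.trans hM).le one_le_enorm _).trans
          (by gcongr)
    _ = (∑' j : ℤ, decayBump σ M (lam ^ j)) * ‖lam‖ₑ ^ σ := ENNReal.tsum_mul_right

theorem lintegral_realMulHaar_ne_top (hσ : 0 < σ) (hM : σ < M) :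
    ∫⁻ t, decayBump σ M t ∂realMulHaar ≠ ⊤ := by
  obtain ⟨C, hC, hCle⟩ := exists_tsum_zpow_mul_le two_pos (OfNat.ofNat_ne_one 2) hσ hM
  exact ne_top_of_le_ne_top (ENNReal.mul_ne_top hC (realMulHaar_shell_ne_top 2))
    (lintegral_realMulHaar_le_of_tsum_dilate_le one_lt_two measurable hCle)

theorem exists_lintegral_rpow_tsum_le {lam : ℝ} (hlam0 : 0 < lam) (hlam1 : lam ≠ 1)
    (hσ : 0 < σ) (hM : σ < M) {ρ : ℝ} (hρ : 1 ≤ ρ) :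
    ∃ K : ℝ≥0∞, K ≠ ⊤ ∧ ∀ A : ℕ → ℝ≥0∞,
      ∫⁻ t, (∑' j : ℕ, decayBump σ M (lam ^ j * t) * A j) ^ ρ ∂realMulHaar ≤
        K * ∑' j, A j ^ ρ := by
  obtain ⟨C, hC, hCle⟩ := exists_tsum_zpow_mul_le hlam0 hlam1 hσ hM
  refine ⟨C ^ (ρ - 1) * ∫⁻ t, decayBump σ M t ∂realMulHaar,
    ENNReal.mul_ne_top (ENNReal.rpow_ne_top_of_nonneg (sub_nonneg.2 hρ) hC)
      (lintegral_realMulHaar_ne_top hσ hM),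
    lintegral_rpow_tsum_mul_le hρ (fun j => by fun_prop) ?_ fun j =>
      (lintegral_realMulHaar_comp_mul_left (pow_pos hlam0 j).ne' measurable).le⟩
  filter_upwards [ae_realMulHaar_ne_zero] with t ht
  refine le_trans ?_ (hCle t ht)
  simpa only [Function.comp_def, zpow_natCast] using ENNReal.tsum_comp_le_tsum_of_injective
    Nat.cast_injective fun j : ℤ => decayBump σ M (lam ^ j * t)

end decayBump

section MainEstimate

theorem enorm_rpow_mul_dilate_le {φ : ℝ → ℝ≥0∞} {B : ℝ≥0∞} {N : ℝ}
    (hφ : ∀ t, φ t ≤ B * (1 + ‖t‖ₑ) ^ (-N)) (σ d : ℝ) {t : ℝ} (ht : t ≠ 0) :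
    ‖d‖ₑ ^ σ * φ (d * t) ≤ B * ‖t‖ₑ ^ (-σ) * decayBump σ N (d * t) := by
  have ht0 : ‖t‖ₑ ≠ 0 := enorm_ne_zero.2 ht
  have enorm_rpow_eq : ‖d‖ₑ ^ σ = ‖t‖ₑ ^ (-σ) * ‖d * t‖ₑ ^ σ := by
    rw [enorm_mul, ENNReal.mul_rpow_of_ne_top enorm_ne_top enorm_ne_top, mul_left_comm,
      ← ENNReal.rpow_add _ _ ht0 enorm_ne_top, neg_add_cancel, ENNReal.rpow_zero, mul_one]
  calc ‖d‖ₑ ^ σ * φ (d * t)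
      ≤ ‖t‖ₑ ^ (-σ) * ‖d * t‖ₑ ^ σ * (B * (1 + ‖d * t‖ₑ) ^ (-N)) := by
        rw [enorm_rpow_eq]
        gcongr
        exact hφ _
    _ = B * ‖t‖ₑ ^ (-σ) * decayBump σ N (d * t) := by
        rw [decayBump]
        ring

theorem rpow_tsum_dilate_mul_le {φ : ℝ → ℝ≥0∞} {B : ℝ≥0∞} {N r s : ℝ} (hr : 0 < r) (hs : 0 < s)
    (hφ : ∀ t, φ t ≤ B * (1 + ‖t‖ₑ) ^ (-N)) (d : ℕ → ℝ) (V : ℕ → ℝ≥0∞) {t : ℝ} (ht : t ≠ 0) :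
    (∑' j, (V j * (‖d j‖ₑ ^ (1 / r) * φ (d j * t))) ^ s) ^ (r / s) ≤
      B ^ r * (‖t‖ₑ⁻¹ * (∑' j, decayBump (1 / r * s) (N * s) (d j * t) * V j ^ s) ^ (r / s)) := by
  set b := B * ‖t‖ₑ ^ (-(1 / r))
  calc (∑' j, (V j * (‖d j‖ₑ ^ (1 / r) * φ (d j * t))) ^ s) ^ (r / s)
      ≤ (∑' j, (V j * (b * decayBump (1 / r) N (d j * t))) ^ s) ^ (r / s) := by
        refine ENNReal.rpow_le_rpow (ENNReal.tsum_le_tsum fun j => ?_) (by positivity)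
        exact ENNReal.rpow_le_rpow (mul_le_mul_right (enorm_rpow_mul_dilate_le hφ _ _ ht) _) hs.le
    _ = (b ^ s * ∑' j, decayBump (1 / r * s) (N * s) (d j * t) * V j ^ s) ^ (r / s) := by
        simp_rw [← ENNReal.tsum_mul_left, ENNReal.mul_rpow_of_nonneg _ _ hs.le,
          decayBump.rpow_eq hs.le]
        congr 2 with j
        ring
    _ = B ^ r * (‖t‖ₑ⁻¹ *
          (∑' j, decayBump (1 / r * s) (N * s) (d j * t) * V j ^ s) ^ (r / s)) := by
        rw [ENNReal.mul_rpow_of_nonneg _ _ (by positivity), ← ENNReal.rpow_mul,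
          mul_div_cancel₀ r hs.ne', ENNReal.mul_rpow_of_nonneg _ _ hr.le, ← ENNReal.rpow_mul,
          neg_mul, one_div_mul_cancel hr.ne', ENNReal.rpow_neg_one, mul_assoc]

theorem exists_exponent_le {n : ℕ} {p : Fin n → ℝ} (hp : ∀ i, 0 < p i) {r : ℝ} (hr : 0 < r)
    {q : ℝ≥0∞} (hq : 0 < q) :
    ∃ s : ℝ, 0 < s ∧ (∀ i, s ≤ p i) ∧ s ≤ r ∧ ENNReal.ofReal s ≤ q := by
  have eventually_le {y : ℝ} (hy : 0 < y) : ∀ᶠ s in 𝓝[>] (0 : ℝ), s ≤ y :=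
    (eventually_le_nhds hy).filter_mono nhdsWithin_le_nhds
  have tendsto_ofReal : Tendsto ENNReal.ofReal (𝓝[>] 0) (𝓝 0) := by
    simpa using (ENNReal.continuous_ofReal.tendsto 0).mono_left nhdsWithin_le_nhds
  exact (eventually_mem_nhdsWithin.and ((eventually_all.2 fun i => eventually_le (hp i)).and
    ((eventually_le hr).and (tendsto_ofReal.eventually_le_const hq)))).exists

theorem exists_lintegral_mixedLpNorm_lqNorm_dilate_le {n : ℕ} {p : Fin n → ℝ}
    (hp : ∀ i, 0 < p i) {r : ℝ} (hr : 0 < r) {q : ℝ≥0∞} (hq : 0 < q) {lam : ℝ} (hlam0 : 0 < lam)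
    (hlam1 : lam ≠ 1) {N : ℝ} (hNr : 1 < N * r) {φ : ℝ → ℝ≥0∞} {B : ℝ≥0∞} (hB : B ≠ ⊤)
    (hφ : ∀ t, φ t ≤ B * (1 + ‖t‖ₑ) ^ (-N)) :
    ∃ K : ℝ≥0∞, K ≠ ⊤ ∧ ∀ G : ℕ → (Fin n → ℝ) → ℝ≥0∞, (∀ j, Measurable (G j)) →
      ∫⁻ t : ℝ, (mixedLpNorm n p fun x =>
          lqNorm q fun j => G j x * (‖lam ^ j‖ₑ ^ (1 / r) * φ (lam ^ j * t))) ^ r ≤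
        K * ∑' j, mixedLpNorm n p (G j) ^ r := by
  obtain ⟨s, hs, hsp, hsr, hsq⟩ := exists_exponent_le hp hr hq
  have hN : 1 / r < N := (div_lt_iff₀ hr).2 hNr
  have hφ_ne_top (t : ℝ) : φ t ≠ ⊤ := ne_top_of_le_ne_top
    (ENNReal.mul_ne_top hB (ENNReal.rpow_ne_top_of_ne_zero (by simp) (by simp))) (hφ t)
  obtain ⟨K, hK, hKle⟩ := decayBump.exists_lintegral_rpow_tsum_le hlam0 hlam1
    (by positivity : 0 < 1 / r * s) (mul_lt_mul_of_pos_right hN hs) ((one_le_div hs).2 hsr)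
  have hBr : B ^ r ≠ ⊤ := ENNReal.rpow_ne_top_of_nonneg hr.le hB
  refine ⟨B ^ r * K, ENNReal.mul_ne_top hBr hK, fun G hG => ?_⟩
  set V : ℕ → ℝ≥0∞ := fun j => mixedLpNorm n p (G j)
  set w : ℕ → ℝ → ℝ≥0∞ := fun j t => ‖lam ^ j‖ₑ ^ (1 / r) * φ (lam ^ j * t)
  set κ := decayBump (1 / r * s) (N * s)
  have hw (j : ℕ) (t : ℝ) : w j t ≠ ⊤ := ENNReal.mul_ne_top
    (ENNReal.rpow_ne_top_of_nonneg (by positivity) enorm_ne_top) (hφ_ne_top _)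
  calc ∫⁻ t : ℝ, (mixedLpNorm n p fun x => lqNorm q fun j => G j x * w j t) ^ r
      ≤ ∫⁻ t : ℝ, ((∑' j, (V j * w j t) ^ s) ^ (1 / s)) ^ r := by
        gcongr with t
        exact mixedLpNorm_lqNorm_mul_const_le hs hsp hsq hG fun j => hw j t
    _ ≤ ∫⁻ t : ℝ, B ^ r * (‖t‖ₑ⁻¹ * (∑' j, κ (lam ^ j * t) * V j ^ s) ^ (r / s)) := by
        simp_rw [← ENNReal.rpow_mul, one_div_mul_eq_div]
        refine lintegral_mono_ae ((Measure.ae_ne volume 0).mono fun t ht => ?_)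
        exact rpow_tsum_dilate_mul_le hr hs hφ _ V ht
    _ = B ^ r * ∫⁻ t, (∑' j, κ (lam ^ j * t) * V j ^ s) ^ (r / s) ∂realMulHaar := by
        rw [lintegral_const_mul' _ _ hBr, lintegral_realMulHaar]
    _ ≤ B ^ r * (K * ∑' j, (V j ^ s) ^ (r / s)) := by
        gcongr
        exact hKle _
    _ = B ^ r * K * ∑' j, V j ^ r := by
        simp_rw [← ENNReal.rpow_mul, mul_div_cancel₀ r hs.ne', mul_assoc]

theorem enorm_le_of_one_add_abs_rpow_mul_norm_le {F : Type*} [SeminormedAddGroup F] {N C t : ℝ}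
    {y : F} (h : (1 + |t|) ^ N * ‖y‖ ≤ C) : ‖y‖ₑ ≤ ENNReal.ofReal C * (1 + ‖t‖ₑ) ^ (-N) := by
  have hpos : 0 < 1 + |t| := by positivity
  rw [Real.enorm_eq_ofReal_abs, ← ENNReal.ofReal_one,
    ← ENNReal.ofReal_add zero_le_one (abs_nonneg t), ENNReal.ofReal_rpow_of_pos hpos,
    ← ENNReal.ofReal_mul' (by positivity), ← ofReal_norm]
  refine ENNReal.ofReal_le_ofReal ?_
  rwa [Real.rpow_neg hpos.le, ← div_eq_mul_inv, le_div_iff₀ (by positivity), mul_comm]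

theorem mixed_norm_tensor_estimate_general {E F : Type*} [SeminormedAddGroup E]
    [MeasurableSpace E] [OpensMeasurableSpace E] [SeminormedAddGroup F] {n : ℕ} {p : Fin n → ℝ}
    (hp : ∀ i, 0 < p i) {r : ℝ} (hr : 0 < r) {q : ℝ≥0∞} (hq : 0 < q) {a : ℝ} (ha : a ≠ 0) {N : ℝ}
    (hNr : 1 < N * r) {f : ℝ → F} (hf : ∃ C : ℝ, ∀ t : ℝ, (1 + |t|) ^ N * ‖f t‖ ≤ C) :
    ∃ c : ℝ≥0∞, c ≠ ⊤ ∧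
      ∀ v : ℕ → (Fin n → ℝ) → E, (∀ j, Measurable (v j)) →
        (∫⁻ t : ℝ,
            (mixedLpNorm n p fun x =>
              lqNorm q fun j =>
                (‖v j x‖₊ : ℝ≥0∞)
                  * ENNReal.ofReal ((2 : ℝ) ^ ((j : ℝ) * a / r))
                  * (‖f ((2 : ℝ) ^ ((j : ℝ) * a) * t)‖₊ : ℝ≥0∞)) ^ r) ^ (1 / r)
          ≤ c * (∑' j : ℕ, (mixedLpNorm n p fun x => (‖v j x‖₊ : ℝ≥0∞)) ^ r) ^ (1 / r) := by
  obtain ⟨C, hC⟩ := hf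
  have two_rpow_ne_one : (2 : ℝ) ^ a ≠ 1 := by
    rw [← Real.rpow_zero 2]
    exact ha ∘ (Real.rpow_right_inj two_pos (OfNat.ofNat_ne_one 2)).1
  obtain ⟨K, hK, hKle⟩ := exists_lintegral_mixedLpNorm_lqNorm_dilate_le hp hr hq
    (Real.rpow_pos_of_pos two_pos a) two_rpow_ne_one hNr ENNReal.ofReal_ne_top
    fun t => enorm_le_of_one_add_abs_rpow_mul_norm_le (hC t)
  have scale_eq (j : ℕ) : (2 : ℝ) ^ ((j : ℝ) * a) = ((2 : ℝ) ^ a) ^ j := by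
    rw [mul_comm, Real.rpow_mul_natCast two_pos.le]
  have weight_eq (j : ℕ) :
      ENNReal.ofReal ((2 : ℝ) ^ ((j : ℝ) * a / r)) = ‖((2 : ℝ) ^ a) ^ j‖ₑ ^ (1 / r) := by
    rw [← scale_eq, Real.enorm_of_nonneg (by positivity),
      ENNReal.ofReal_rpow_of_pos (by positivity), ← Real.rpow_mul two_pos.le, mul_one_div]
  refine ⟨K ^ (1 / r), ENNReal.rpow_ne_top_of_nonneg (by positivity) hK, fun v hv => ?_⟩
  rw [← ENNReal.mul_rpow_of_nonneg _ _ (by positivity)]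
  simp_rw [weight_eq, scale_eq, mul_assoc]
  gcongr
  exact hKle (fun j x => ‖v j x‖ₑ) fun j => (hv j).enorm

end MainEstimate

/-- (Fundamental mixed-norm estimate, Proposition `Q-prop`.)
For exponents `p₁,…,pₙ, r ∈ (0,∞)`, `q ∈ (0,∞]`, `a > 0`, `N > 0` with `N·r > 1`, and a
continuous `f : ℝ → ℂ` with `(1+|t|)^N |f(t)|` bounded, there is a constant `c` such that
`‖{(x,t) ↦ v_j(x)·2^{ja/r}·f(2^{ja}t)}_j ‖_{L_{(p₁,…,pₙ,r)}(ℓ_q)} ≤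
c·(Σ_j ‖v_j‖_{L_{(p₁,…,pₙ)}}^r)^{1/r}` for all sequences of measurable `v_j : ℝⁿ → ℂ`. -/
theorem mixed_norm_tensor_estimate (n : ℕ) (p : Fin n → ℝ) (hp : ∀ i, 0 < p i)
    (r : ℝ) (hr : 0 < r) (q : ℝ≥0∞) (hq : 0 < q)
    (a : ℝ) (ha : 0 < a) (N : ℝ) (hN : 0 < N) (hNr : 1 < N * r)
    (f : ℝ → ℂ) (hf : Continuous f)
    (hfb : ∃ C : ℝ, ∀ t : ℝ, (1 + |t|) ^ N * ‖f t‖ ≤ C) :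
    ∃ c : ℝ≥0∞, c ≠ ⊤ ∧
      ∀ v : ℕ → (Fin n → ℝ) → ℂ, (∀ j, Measurable (v j)) →
        (∫⁻ t : ℝ,
            (mixedLpNorm n p fun x =>
              lqNorm q fun j =>
                (‖v j x‖₊ : ℝ≥0∞)
                  * ENNReal.ofReal ((2:ℝ) ^ ((j:ℝ) * a / r))
                  * (‖f ((2:ℝ) ^ ((j:ℝ) * a) * t)‖₊ : ℝ≥0∞)) ^ r) ^ (1 / r)
          ≤ c * (∑' j : ℕ, (mixedLpNorm n p fun x => (‖v j x‖₊ : ℝ≥0∞)) ^ r) ^ (1 / r) :=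
  mixed_norm_tensor_estimate_general hp hr hq ha.ne' hNr hfb

end
end

section
/- Let a = (a₁,…,aₙ) ∈ [1,∞)ⁿ and let ψ ∈ 𝓢(ℝⁿ) have vanishing moments of all orders. Then for every η ∈ 𝓢(ℝⁿ), every M ∈ ℕ and every N > 0 there is a constant C such that p_M(ψ̌_j * η) ≤ C·2^{−jN} for every j ≥ 1, where ψ_j(x) = 2^{j|a|} ψ(2^{ja}x) and ψ̌(x) = ψ(−x). -/
/-!
Substituting `z = 2^{ja}(y - x)` turns `ψ̌_j * η` into `x ↦ ∫ ψ(z) η(x + 2^{-ja}z) dz`, in which the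
dilation acts on `η` only, as a linear map `L` of norm at most `2^{-jε}` whenever `0 < ε ≤ aᵢ` for
all `i`. Derivatives in `x` fall on `η` as well. The vanishing moments allow us to subtract from
`η(x + Lz)` its Taylor polynomial in `Lz` of any order `K`, and the remainder is
`O((‖L‖‖z‖)^{K+1})`. It inherits the decay of `η` in `x` at the price of powers of `1 + ‖z‖`
(Peetre's inequality), which are integrable against `ψ`. It remains to take `K ≥ N/ε`.
-/

open MeasureTheory Filter Topology

noncomputable section

/-- The Schwartz seminorm `p_M`, controlling all derivatives of order `≤ M`
with polynomial weights of order `≤ M`. -/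
def pM {E : Type*} [NormedAddCommGroup E] [NormedSpace ℝ E]
    (M : ℕ) (φ : SchwartzMap E ℝ) : ℝ :=
  ((Finset.range (M+1) ×ˢ Finset.range (M+1)).sup
    fun kn => SchwartzMap.seminorm ℝ kn.1 kn.2) φ

lemma one_add_norm_le_mul_one_add_norm {E : Type*} [SeminormedAddCommGroup E] (x h : E) :
    1 + ‖x‖ ≤ (1 + ‖x + h‖) * (1 + ‖h‖) := by
  have hx : ‖x‖ ≤ ‖x + h‖ + ‖h‖ := by simpa using norm_sub_le (x + h) h
  nlinarith [norm_nonneg (x + h), norm_nonneg h]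

lemma norm_iteratedFDeriv_iteratedFDeriv {𝕜 E F : Type*} [NontriviallyNormedField 𝕜]
    [NormedAddCommGroup E] [NormedSpace 𝕜 E] [NormedAddCommGroup F] [NormedSpace 𝕜 F]
    (f : E → F) (m l : ℕ) (x : E) :
    ‖iteratedFDeriv 𝕜 m (iteratedFDeriv 𝕜 l f) x‖ = ‖iteratedFDeriv 𝕜 (m + l) f x‖ := by
  induction l generalizing m with
  | zero =>
    rw [iteratedFDeriv_zero_eq_comp, LinearIsometryEquiv.norm_iteratedFDeriv_comp_left, add_zero]
  | succ l ih =>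
    have hcurry := LinearIsometryEquiv.norm_iteratedFDeriv_comp_left (𝕜 := 𝕜)
      (continuousMultilinearCurryLeftEquiv 𝕜 (fun _ : Fin (l + 1) => E) F).symm
      (fderiv 𝕜 (iteratedFDeriv 𝕜 l f)) x m
    rw [iteratedFDeriv_succ_eq_comp_left]
    refine hcurry.trans ?_
    rw [norm_iteratedFDeriv_fderiv, ih, add_right_comm, add_assoc]

section Taylor

variable {E F : Type*} [NormedAddCommGroup E] [NormedAddCommGroup F] [NormedSpace ℝ E]
  [NormedSpace ℝ F] {f : E → F}

/-- The Taylor polynomial of order `n` of `f` at `x`, evaluated at the increment `h`. -/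
def taylorPolynomial (f : E → F) (n : ℕ) (x h : E) : F :=
  ∑ m ∈ Finset.range (n + 1), (m.factorial : ℝ)⁻¹ • iteratedFDeriv ℝ m f x fun _ => h

lemma norm_sub_taylorPolynomial_le [CompleteSpace F] {n : ℕ} (hf : ContDiff ℝ (n + 1) f)
    {x h : E} {B : ℝ} (hB : ∀ t ∈ Set.Icc (0 : ℝ) 1, ‖iteratedFDeriv ℝ (n + 1) f (x + t • h)‖ ≤ B) :
    ‖f (x + h) - taylorPolynomial f n x h‖ ≤ B * ‖h‖ ^ (n + 1) := by
  have hbound : ∀ t ∈ Set.uIoc (0 : ℝ) 1,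
      ‖(1 - t) ^ n • iteratedFDeriv ℝ (n + 1) f (x + t • h) fun _ => h‖ ≤ B * ‖h‖ ^ (n + 1) := by
    intro t ht
    rw [Set.uIoc_of_le zero_le_one] at ht
    have hweight : ‖(1 - t) ^ n‖ ≤ 1 := by
      rw [norm_pow, Real.norm_of_nonneg (by linarith [ht.2])]
      exact pow_le_one₀ (by linarith [ht.2]) (by linarith [ht.1])
    calc ‖(1 - t) ^ n • iteratedFDeriv ℝ (n + 1) f (x + t • h) fun _ => h‖
        ≤ 1 * (‖iteratedFDeriv ℝ (n + 1) f (x + t • h)‖ * ‖h‖ ^ (n + 1)) := by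
          rw [norm_smul]
          gcongr
          simpa using (iteratedFDeriv ℝ (n + 1) f (x + t • h)).le_opNorm fun _ => h
      _ ≤ B * ‖h‖ ^ (n + 1) := by
          rw [one_mul]
          gcongr
          exact hB t (Set.Ioc_subset_Icc_self ht)
  rw [map_add_eq_sum_add_integral_iteratedFDeriv fun t _ => hf.contDiffAt, taylorPolynomial,
    add_sub_cancel_left, norm_smul]
  refine (mul_le_of_le_one_left (norm_nonneg _) ?_).trans
    ((intervalIntegral.norm_integral_le_of_norm_le_const hbound).trans_eq (by simp))
  simpa using inv_le_one_of_one_le₀ (Nat.one_le_cast.2 n.factorial_pos)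

lemma one_add_norm_pow_mul_norm_sub_taylorPolynomial_le [CompleteSpace F] {n k : ℕ}
    (hf : ContDiff ℝ (n + 1) f) {A : ℝ}
    (hA : ∀ y, (1 + ‖y‖) ^ k * ‖iteratedFDeriv ℝ (n + 1) f y‖ ≤ A) (x h : E) :
    (1 + ‖x‖) ^ k * ‖f (x + h) - taylorPolynomial f n x h‖ ≤
      A * ((1 + ‖h‖) ^ k * ‖h‖ ^ (n + 1)) := by
  have hderiv : ∀ t ∈ Set.Icc (0 : ℝ) 1,
      ‖iteratedFDeriv ℝ (n + 1) f (x + t • h)‖ ≤ A * (1 + ‖h‖) ^ k / (1 + ‖x‖) ^ k := by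
    intro t ht
    have hth : ‖t • h‖ ≤ ‖h‖ := by
      rw [norm_smul, Real.norm_of_nonneg ht.1]
      exact mul_le_of_le_one_left (norm_nonneg h) ht.2
    rw [le_div_iff₀' (by positivity)]
    calc (1 + ‖x‖) ^ k * ‖iteratedFDeriv ℝ (n + 1) f (x + t • h)‖
        ≤ ((1 + ‖x + t • h‖) * (1 + ‖h‖)) ^ k * ‖iteratedFDeriv ℝ (n + 1) f (x + t • h)‖ := by
          gcongr
          exact (one_add_norm_le_mul_one_add_norm x (t • h)).trans (by gcongr)
      _ = ((1 + ‖x + t • h‖) ^ k * ‖iteratedFDeriv ℝ (n + 1) f (x + t • h)‖) * (1 + ‖h‖) ^ k := by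
          rw [mul_pow, mul_right_comm]
      _ ≤ A * (1 + ‖h‖) ^ k := by gcongr; exact hA _
  rw [← le_div_iff₀' (by positivity)]
  exact (norm_sub_taylorPolynomial_le hf hderiv).trans_eq (by ring)

end Taylor

section Moments

variable {G : Type*} [NormedAddCommGroup G] [MeasurableSpace G] {ψ : G → ℝ} {μ : Measure G}

/-- The function `ψ` has finite absolute moments of every order with respect to `μ`. -/
structure HasFiniteMoments (ψ : G → ℝ) (μ : Measure G) : Prop where
  aestronglyMeasurable : AEStronglyMeasurable ψ μ
  integrable_norm_pow_mul : ∀ k : ℕ, Integrable (fun z => ‖z‖ ^ k * ‖ψ z‖) μ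

namespace HasFiniteMoments

lemma of_schwartzMap [NormedSpace ℝ G] [BorelSpace G] [SecondCountableTopology G]
    [μ.HasTemperateGrowth] (ψ : SchwartzMap G ℝ) : HasFiniteMoments ψ μ where
  aestronglyMeasurable := ψ.continuous.aestronglyMeasurable
  integrable_norm_pow_mul := ψ.integrable_pow_mul μ

lemma integrable (hψ : HasFiniteMoments ψ μ) : Integrable ψ μ :=
  (integrable_norm_iff hψ.aestronglyMeasurable).1 (by simpa using hψ.integrable_norm_pow_mul 0)

lemma integrable_one_add_norm_pow_mul (hψ : HasFiniteMoments ψ μ) (k m : ℕ) :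
    Integrable (fun z => (1 + ‖z‖) ^ k * ‖z‖ ^ m * ‖ψ z‖) μ := by
  have hexpand : ∀ z : G, (1 + ‖z‖) ^ k * ‖z‖ ^ m * ‖ψ z‖ =
      ∑ i ∈ Finset.range (k + 1), (k.choose i : ℝ) * (‖z‖ ^ (i + m) * ‖ψ z‖) := by
    intro z
    rw [add_comm, add_pow, Finset.sum_mul, Finset.sum_mul]
    exact Finset.sum_congr rfl fun i _ => by ring
  simp_rw [hexpand]
  exact integrable_finsetSum _ fun i _ => (hψ.integrable_norm_pow_mul _).const_mul _

variable [NormedSpace ℝ G] [OpensMeasurableSpace G] [SecondCountableTopology G]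
  {F : Type*} [NormedAddCommGroup F] [NormedSpace ℝ F]

lemma integrable_smul_diagonal (hψ : HasFiniteMoments ψ μ) {m : ℕ}
    (A : ContinuousMultilinearMap ℝ (fun _ : Fin m => G) F) :
    Integrable (fun z => ψ z • A fun _ => z) μ := by
  refine ((hψ.integrable_norm_pow_mul m).const_mul ‖A‖).mono'
    (hψ.aestronglyMeasurable.smul
      (A.cont.comp (continuous_pi fun _ => continuous_id)).aestronglyMeasurable)
    (.of_forall fun z => ?_)
  calc ‖ψ z • A fun _ => z‖ ≤ ‖ψ z‖ * (‖A‖ * ‖z‖ ^ m) := by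
        rw [norm_smul]
        gcongr
        simpa using A.le_opNorm fun _ => z
    _ = ‖A‖ * (‖z‖ ^ m * ‖ψ z‖) := by ring

end HasFiniteMoments

/-- The moments of `ψ` of all orders exist and vanish. To avoid coordinates, a moment of order `m`
is the integral of `ψ` against the restriction to the diagonal of an `m`-linear form. -/
structure HasVanishingMoments [NormedSpace ℝ G] (ψ : G → ℝ) (μ : Measure G) : Prop
    extends HasFiniteMoments ψ μ where
  integral_mul_diagonal_eq_zero : ∀ (m : ℕ) (A : ContinuousMultilinearMap ℝ (fun _ : Fin m => G) ℝ),
    ∫ z, ψ z * A (fun _ => z) ∂μ = 0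

namespace HasVanishingMoments

lemma integral_smul_diagonal_eq_zero [NormedSpace ℝ G] [OpensMeasurableSpace G]
    [SecondCountableTopology G] {F : Type*} [NormedAddCommGroup F] [NormedSpace ℝ F]
    [CompleteSpace F] (hψ : HasVanishingMoments ψ μ) {m : ℕ}
    (A : ContinuousMultilinearMap ℝ (fun _ : Fin m => G) F) :
    ∫ z, ψ z • A (fun _ => z) ∂μ = 0 := by
  refine SeparatingDual.eq_zero_of_forall_dual_eq_zero (R := ℝ) fun g => ?_
  rw [← g.integral_comp_comm (hψ.integrable_smul_diagonal A)]
  simpa using hψ.integral_mul_diagonal_eq_zero m (g.compContinuousMultilinearMap A)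

lemma of_coordinates {ι : Type*} [Fintype ι] {ψ : (ι → ℝ) → ℝ} {μ : Measure (ι → ℝ)}
    (hψ : HasFiniteMoments ψ μ) (hmom : ∀ α : ι → ℕ, ∫ z, (∏ i, z i ^ α i) * ψ z ∂μ = 0) :
    HasVanishingMoments ψ μ where
  toHasFiniteMoments := hψ
  integral_mul_diagonal_eq_zero m A := by
    classical
    have hexpand : ∀ z : ι → ℝ, ψ z * A (fun _ => z) =
        ∑ r : Fin m → ι, ψ z * (∏ i, z (r i)) * A (fun i => Pi.single (r i) 1) := by
      intro z
      have hA : A (fun _ => z) = A fun _ => ∑ i, z i • Pi.single i 1 := by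
        rw [← pi_eq_sum_univ' z]
      simp [hA, A.map_sum, A.map_smul_univ, Finset.mul_sum, mul_assoc]
    have hintegrable : ∀ r : Fin m → ι, Integrable (fun z => ψ z * ∏ i, z (r i)) μ := fun r => by
      simpa using hψ.integrable_smul_diagonal
        ((ContinuousMultilinearMap.mkPiAlgebra ℝ (Fin m) ℝ).compContinuousLinearMap
          fun i => .proj (r i))
    have hmonomial : ∀ r : Fin m → ι, ∫ z, ψ z * ∏ i, z (r i) ∂μ = 0 := by
      intro r
      rw [← hmom fun l => (Finset.univ.filter fun i => r i = l).card]
      congr with z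
      rw [mul_comm, ← Finset.prod_fiberwise' _ r z]
      simp only [Finset.prod_const]
    simp_rw [hexpand]
    rw [integral_finsetSum _ fun r _ => (hintegrable r).mul_const _]
    simp [integral_mul_const, hmonomial]

end HasVanishingMoments

end Moments

section Correlation

variable {G E F : Type*} [NormedAddCommGroup G] [NormedSpace ℝ G] [MeasurableSpace G]
  [NormedAddCommGroup E] [NormedSpace ℝ E] [NormedAddCommGroup F] [NormedSpace ℝ F]
  {ψ : G → ℝ} {μ : Measure G}

/-- The correlation `x ↦ ∫ ψ(z) f(x + Lz) dμ(z)` of `ψ` and `f` along the linear map `L`. For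
`Lz = 2^{-ja}z` and Lebesgue measure this is `ψ̌_j * f`. -/
def correlation (ψ : G → ℝ) (μ : Measure G) (L : G →L[ℝ] E) (f : E → F) (x : E) : F :=
  ∫ z, ψ z • f (x + L z) ∂μ

lemma comp_correlation {F' : Type*} [NormedAddCommGroup F'] [NormedSpace ℝ F']
    (e : F ≃ₗᵢ[ℝ] F') (L : G →L[ℝ] E) (f : E → F) :
    e ∘ correlation ψ μ L f = correlation ψ μ L (e ∘ f) := by
  ext1 x
  simpa [correlation] using
    (e.toContinuousLinearEquiv.integral_comp_comm (μ := μ) fun z => ψ z • f (x + L z)).symm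

variable [OpensMeasurableSpace G] [SecondCountableTopology G]

lemma aestronglyMeasurable_smul_comp_add (hψ : AEStronglyMeasurable ψ μ) {f : E → F}
    (hf : Continuous f) (L : G →L[ℝ] E) (x : E) :
    AEStronglyMeasurable (fun z => ψ z • f (x + L z)) μ :=
  hψ.smul (hf.comp (continuous_const.add L.continuous)).aestronglyMeasurable

lemma integrable_smul_comp_add_s16 (hψ : Integrable ψ μ) {f : E → F} (hf : Continuous f) {B : ℝ}
    (hB : ∀ y, ‖f y‖ ≤ B) (L : G →L[ℝ] E) (x : E) : Integrable (fun z => ψ z • f (x + L z)) μ :=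
  (hψ.norm.mul_const B).mono' (aestronglyMeasurable_smul_comp_add hψ.1 hf L x) <|
    .of_forall fun z => by rw [norm_smul]; gcongr; exact hB _

lemma hasFDerivAt_correlation (hψ : Integrable ψ μ) {f : E → F} (hf : ContDiff ℝ 1 f) {B B' : ℝ}
    (hB : ∀ y, ‖f y‖ ≤ B) (hB' : ∀ y, ‖fderiv ℝ f y‖ ≤ B') (L : G →L[ℝ] E) (x : E) :
    HasFDerivAt (correlation ψ μ L f) (correlation ψ μ L (fderiv ℝ f) x) x := by
  refine hasFDerivAt_integral_of_dominated_of_fderiv_le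
    (F' := fun y z => ψ z • fderiv ℝ f (y + L z)) (bound := fun z => ‖ψ z‖ * B') univ_mem
    (.of_forall fun y => aestronglyMeasurable_smul_comp_add hψ.1 hf.continuous L y)
    (integrable_smul_comp_add_s16 hψ hf.continuous hB L x)
    (aestronglyMeasurable_smul_comp_add hψ.1 (hf.continuous_fderiv one_ne_zero) L x)
    (.of_forall fun z y _ => ?_) (hψ.norm.mul_const B') (.of_forall fun z y _ => ?_)
  · rw [norm_smul]
    gcongr
    exact hB' _
  · exact ((hasFDerivAt_comp_add_right (L z)).2
      (hf.differentiable one_ne_zero _).hasFDerivAt).const_smul (ψ z)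

lemma iteratedFDeriv_correlation (hψ : Integrable ψ μ) {f : E → F} {l : ℕ} (hf : ContDiff ℝ l f)
    (hB : ∀ m ≤ l, ∃ B, ∀ y, ‖iteratedFDeriv ℝ m f y‖ ≤ B) (L : G →L[ℝ] E) :
    iteratedFDeriv ℝ l (correlation ψ μ L f) = correlation ψ μ L (iteratedFDeriv ℝ l f) := by
  induction l with
  | zero =>
    simp only [iteratedFDeriv_zero_eq_comp]
    exact comp_correlation (continuousMultilinearCurryFin0 ℝ E F).symm L f
  | succ l ih =>
    obtain ⟨B, hB₀⟩ := hB l l.le_succ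
    obtain ⟨B', hB₁⟩ := hB (l + 1) le_rfl
    have hderiv : fderiv ℝ (iteratedFDeriv ℝ l (correlation ψ μ L f)) =
        correlation ψ μ L (fderiv ℝ (iteratedFDeriv ℝ l f)) := by
      rw [ih (hf.of_le (by simp)) fun m hm => hB m (hm.trans l.le_succ)]
      ext1 x
      exact (hasFDerivAt_correlation hψ (hf.iteratedFDeriv_right (by simp [add_comm])) hB₀
        (fun y => norm_fderiv_iteratedFDeriv.trans_le (hB₁ y)) L x).fderiv
    rw [iteratedFDeriv_succ_eq_comp_left, iteratedFDeriv_succ_eq_comp_left, hderiv]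
    have hcurry := comp_correlation (ψ := ψ) (μ := μ)
      (continuousMultilinearCurryLeftEquiv ℝ (fun _ : Fin (l + 1) => E) F).symm L
      (fderiv ℝ (iteratedFDeriv ℝ l f))
    exact hcurry

lemma HasFiniteMoments.integrable_smul_taylorPolynomial (hψ : HasFiniteMoments ψ μ) (f : E → F)
    (n : ℕ) (L : G →L[ℝ] E) (x : E) :
    Integrable (fun z => ψ z • taylorPolynomial f n x (L z)) μ := by
  simp only [taylorPolynomial, Finset.smul_sum]
  exact integrable_finsetSum _ fun m _ => hψ.integrable_smul_diagonal
    (((m.factorial : ℝ)⁻¹ • iteratedFDeriv ℝ m f x).compContinuousLinearMap fun _ => L)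

variable [CompleteSpace F]

lemma HasVanishingMoments.integral_smul_taylorPolynomial_eq_zero (hψ : HasVanishingMoments ψ μ)
    (f : E → F) (n : ℕ) (L : G →L[ℝ] E) (x : E) :
    ∫ z, ψ z • taylorPolynomial f n x (L z) ∂μ = 0 := by
  let A (m : ℕ) := ((m.factorial : ℝ)⁻¹ • iteratedFDeriv ℝ m f x).compContinuousLinearMap fun _ => L
  simp only [taylorPolynomial, Finset.smul_sum]
  exact (integral_finsetSum _ fun m _ => hψ.integrable_smul_diagonal (A m)).trans
    (Finset.sum_eq_zero fun m _ => hψ.integral_smul_diagonal_eq_zero (A m))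

lemma HasVanishingMoments.one_add_norm_pow_mul_norm_correlation_le
    (hψ : HasVanishingMoments ψ μ) {k n : ℕ} {f : E → F} (hf : ContDiff ℝ (n + 1) f) {A : ℝ}
    (hA : ∀ y, (1 + ‖y‖) ^ k * ‖iteratedFDeriv ℝ (n + 1) f y‖ ≤ A) {L : G →L[ℝ] E} (hL : ‖L‖ ≤ 1)
    (x : E) :
    (1 + ‖x‖) ^ k * ‖correlation ψ μ L f x‖ ≤
      A * (∫ z, (1 + ‖z‖) ^ k * ‖z‖ ^ (n + 1) * ‖ψ z‖ ∂μ) * ‖L‖ ^ (n + 1) := by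
  have hA₀ : 0 ≤ A := le_trans (by positivity) (hA 0)
  let R : G → F := fun z => f (x + L z) - taylorPolynomial f n x (L z)
  have hpoly := hψ.integrable_smul_taylorPolynomial f n L x
  have hR_le : ∀ z, ‖ψ z • R z‖ ≤
      A * ‖L‖ ^ (n + 1) / (1 + ‖x‖) ^ k * ((1 + ‖z‖) ^ k * ‖z‖ ^ (n + 1) * ‖ψ z‖) := by
    intro z
    have hLz : ‖L z‖ ≤ ‖z‖ := (L.le_of_opNorm_le hL z).trans_eq (one_mul _)
    have hR := one_add_norm_pow_mul_norm_sub_taylorPolynomial_le hf hA x (L z)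
    calc ‖ψ z • R z‖ ≤ ‖ψ z‖ * (A * ((1 + ‖L z‖) ^ k * ‖L z‖ ^ (n + 1)) / (1 + ‖x‖) ^ k) := by
          rw [norm_smul]
          gcongr
          rwa [le_div_iff₀' (by positivity)]
      _ ≤ ‖ψ z‖ * (A * ((1 + ‖z‖) ^ k * (‖L‖ * ‖z‖) ^ (n + 1)) / (1 + ‖x‖) ^ k) := by
          gcongr
          exact L.le_opNorm z
      _ = _ := by ring
  have hR_bound := (hψ.integrable_one_add_norm_pow_mul k (n + 1)).const_mul
    (A * ‖L‖ ^ (n + 1) / (1 + ‖x‖) ^ k)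
  have hR_int : Integrable (fun z => ψ z • R z) μ := by
    refine hR_bound.mono' ?_ (.of_forall hR_le)
    simp only [R, smul_sub]
    exact (aestronglyMeasurable_smul_comp_add hψ.aestronglyMeasurable hf.continuous L x).sub
      hpoly.1
  have hcorr : correlation ψ μ L f x = ∫ z, ψ z • R z ∂μ :=
    calc correlation ψ μ L f x = ∫ z, (ψ z • R z + ψ z • taylorPolynomial f n x (L z)) ∂μ := by
          simp only [correlation, R, ← smul_add, sub_add_cancel]
      _ = ∫ z, ψ z • R z ∂μ := by
          rw [integral_add hR_int hpoly, hψ.integral_smul_taylorPolynomial_eq_zero, add_zero]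
  rw [hcorr, ← le_div_iff₀' (by positivity)]
  exact (norm_integral_le_of_norm_le hR_bound (.of_forall hR_le)).trans_eq
    (by rw [integral_const_mul]; ring)

lemma HasVanishingMoments.exists_one_add_norm_pow_mul_norm_iteratedFDeriv_correlation_le
    (hψ : HasVanishingMoments ψ μ) (f : SchwartzMap E F) (k l n : ℕ) :
    ∃ C, ∀ L : G →L[ℝ] E, ‖L‖ ≤ 1 → ∀ x,
      (1 + ‖x‖) ^ k * ‖iteratedFDeriv ℝ l (correlation ψ μ L f) x‖ ≤ C * ‖L‖ ^ (n + 1) := by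
  have hbdd : ∀ m ≤ l, ∃ B, ∀ y, ‖iteratedFDeriv ℝ m f y‖ ≤ B := fun m _ =>
    ⟨_, f.norm_iteratedFDeriv_le_seminorm ℝ m⟩
  have hdecay : ∀ y,
      (1 + ‖y‖) ^ k * ‖iteratedFDeriv ℝ (n + 1) (iteratedFDeriv ℝ l f) y‖ ≤
        2 ^ k * ((Finset.Iic (k, n + 1 + l)).sup fun m => SchwartzMap.seminorm ℝ m.1 m.2) f := by
    intro y
    rw [norm_iteratedFDeriv_iteratedFDeriv]
    exact f.one_add_le_sup_seminorm_apply (m := (k, n + 1 + l)) le_rfl le_rfl y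
  simp only [iteratedFDeriv_correlation hψ.integrable (f.smooth l) hbdd]
  exact ⟨_, fun L hL x => hψ.one_add_norm_pow_mul_norm_correlation_le
    ((f.smooth (n + 1 + l)).iteratedFDeriv_right (by simp)) hdecay hL x⟩

lemma HasVanishingMoments.exists_sup_seminorm_le_of_eq_correlation (hψ : HasVanishingMoments ψ μ)
    (f : SchwartzMap E F) (s : Finset (ℕ × ℕ)) (n : ℕ) :
    ∃ C, ∀ L : G →L[ℝ] E, ‖L‖ ≤ 1 → ∀ g : SchwartzMap E F, (∀ x, g x = correlation ψ μ L f x) →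
      (s.sup fun m => SchwartzMap.seminorm ℝ m.1 m.2) g ≤ C * ‖L‖ ^ (n + 1) := by
  choose C hC using fun m : ℕ × ℕ =>
    hψ.exists_one_add_norm_pow_mul_norm_iteratedFDeriv_correlation_le f m.1 m.2 n
  refine ⟨∑ m ∈ s, |C m|, fun L hL g hg => Seminorm.finset_sup_apply_le (by positivity) ?_⟩
  intro m hm
  refine g.seminorm_le_bound ℝ m.1 m.2 (by positivity) fun x => ?_
  calc ‖x‖ ^ m.1 * ‖iteratedFDeriv ℝ m.2 g x‖
      ≤ (1 + ‖x‖) ^ m.1 * ‖iteratedFDeriv ℝ m.2 (correlation ψ μ L f) x‖ := by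
        rw [funext hg]
        gcongr
        linarith
    _ ≤ C m * ‖L‖ ^ (n + 1) := hC m L hL x
    _ ≤ (∑ m ∈ s, |C m|) * ‖L‖ ^ (n + 1) := by
        gcongr
        exact (le_abs_self _).trans
          (Finset.single_le_sum (f := fun m => |C m|) (fun _ _ => abs_nonneg _) hm)

end Correlation

section Dilation

lemma correlation_symm_apply {E F : Type*} [NormedAddCommGroup E] [NormedSpace ℝ E]
    [FiniteDimensional ℝ E] [MeasurableSpace E] [BorelSpace E] [NormedAddCommGroup F]
    [NormedSpace ℝ F] (ψ : E → ℝ) (μ : Measure E) [μ.IsAddHaarMeasure] (T : E ≃L[ℝ] E) (f : E → F)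
    (x : E) :
    correlation ψ μ T.symm f x = ∫ y, (|(T : E →L[ℝ] E).det| * ψ (T (y - x))) • f y ∂μ := by
  have hderiv : ∀ y ∈ Set.univ,
      HasFDerivWithinAt (fun y => T (y - x)) (T : E →L[ℝ] E) Set.univ y := fun y _ =>
    (T.hasFDerivAt.comp y (hasFDerivAt_sub_const x)).hasFDerivWithinAt
  have himage : (fun y => T (y - x)) '' Set.univ = Set.univ :=
    Set.image_univ_of_surjective (T.surjective.comp (Equiv.subRight x).surjective)
  have hcov := integral_image_eq_integral_abs_det_fderiv_smul μ .univ hderiv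
    (T.injective.comp (Equiv.subRight x).injective).injOn
    fun z => ψ z • f (x + T.symm z)
  rw [himage, setIntegral_univ, setIntegral_univ] at hcov
  simpa [correlation, mul_smul] using hcov

variable {ι : Type*}

/-- The anisotropic dilation `x ↦ 2^{ta}x`, which multiplies the `i`-th coordinate by `2^{t aᵢ}`. -/
def anisotropicDilation (a : ι → ℝ) (t : ℝ) : (ι → ℝ) ≃L[ℝ] ι → ℝ :=
  .piCongrRight fun i => .unitsEquivAut ℝ (.mk0 ((2 : ℝ) ^ (t * a i)) (by positivity))

lemma anisotropicDilation_apply (a : ι → ℝ) (t : ℝ) (x : ι → ℝ) (i : ι) :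
    anisotropicDilation a t x i = 2 ^ (t * a i) * x i :=
  mul_comm _ _

lemma anisotropicDilation_symm_apply (a : ι → ℝ) (t : ℝ) (x : ι → ℝ) (i : ι) :
    (anisotropicDilation a t).symm x i = 2 ^ (-(t * a i)) * x i := by
  rw [Real.rpow_neg zero_le_two]
  exact mul_comm _ _

variable [Fintype ι]

lemma det_anisotropicDilation (a : ι → ℝ) (t : ℝ) :
    (anisotropicDilation a t : (ι → ℝ) →L[ℝ] ι → ℝ).det = 2 ^ (t * ∑ i, a i) := by
  have hpi : (anisotropicDilation a t : (ι → ℝ) →L[ℝ] ι → ℝ) =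
      .pi fun i => ((2 : ℝ) ^ (t * a i) • ContinuousLinearMap.id ℝ ℝ) ∘SL .proj i := by
    ext x i
    exact anisotropicDilation_apply a t x i
  rw [hpi, ContinuousLinearMap.det_pi, Finset.mul_sum, Real.rpow_sum_of_pos two_pos]
  simp [ContinuousLinearMap.det]

lemma norm_anisotropicDilation_symm_le {a : ι → ℝ} {t ε : ℝ} (ht : 0 ≤ t) (hε : ∀ i, ε ≤ a i) :
    ‖((anisotropicDilation a t).symm : (ι → ℝ) →L[ℝ] ι → ℝ)‖ ≤ 2 ^ (-(t * ε)) := by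
  refine ContinuousLinearMap.opNorm_le_bound _ (by positivity) fun x =>
    (pi_norm_le_iff_of_nonneg (by positivity)).2 fun i => ?_
  rw [ContinuousLinearEquiv.coe_coe, anisotropicDilation_symm_apply, norm_mul,
    Real.norm_of_nonneg (by positivity)]
  gcongr
  · exact one_le_two
  · exact hε i
  · exact norm_le_pi_norm x i

end Dilation

theorem seminorm_reflected_dilation_convolution_decay_general {ι F : Type*} [Fintype ι]
    [NormedAddCommGroup F] [NormedSpace ℝ F] [CompleteSpace F] {a : ι → ℝ} (ha : ∀ i, 0 < a i)
    {ψ : (ι → ℝ) → ℝ} (hψ : HasVanishingMoments ψ volume) (η : SchwartzMap (ι → ℝ) F)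
    (s : Finset (ℕ × ℕ)) (N : ℝ) :
    ∃ C : ℝ, ∀ t : ℝ, 0 ≤ t → ∀ c : SchwartzMap (ι → ℝ) F,
      (∀ x, c x = ∫ y, ((2 : ℝ) ^ (t * ∑ i, a i) *
        ψ (fun i => 2 ^ (t * a i) * (y i - x i))) • η y) →
      (s.sup fun kn => SchwartzMap.seminorm ℝ kn.1 kn.2) c ≤ C * 2 ^ (-t * N) := by
  obtain ⟨ε, hεa, hε⟩ : ∃ ε, (∀ i, ε ≤ a i) ∧ 0 < ε :=
    ((eventually_all.2 fun i => (eventually_le_nhds (ha i)).filter_mono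
      nhdsWithin_le_nhds).and (self_mem_nhdsWithin (s := Set.Ioi 0))).exists
  obtain ⟨n, hn⟩ := exists_nat_ge (N / ε)
  obtain ⟨C, hC⟩ := hψ.exists_sup_seminorm_le_of_eq_correlation η s n
  refine ⟨|C|, fun t ht c hc => ?_⟩
  have hnorm := norm_anisotropicDilation_symm_le ht hεa
  have hcorr : ∀ x, c x = correlation ψ volume (anisotropicDilation a t).symm η x := by
    intro x
    rw [hc, correlation_symm_apply, det_anisotropicDilation, abs_of_pos (by positivity)]
    simp only [← Pi.sub_apply, ← anisotropicDilation_apply]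
  have hexp : -(t * ε) * (n + 1 : ℕ) ≤ -t * N := by
    have hN : N ≤ ε * (n + 1 : ℕ) := by
      rw [div_le_iff₀' hε] at hn
      push_cast
      linarith
    linarith [mul_le_mul_of_nonneg_left hN ht]
  calc (s.sup fun kn => SchwartzMap.seminorm ℝ kn.1 kn.2) c
      ≤ C * ‖((anisotropicDilation a t).symm : (ι → ℝ) →L[ℝ] ι → ℝ)‖ ^ (n + 1) :=
        hC _ (hnorm.trans (Real.rpow_le_one_of_one_le_of_nonpos one_le_two
          (neg_nonpos.2 (by positivity)))) c hcorr
    _ ≤ |C| * ((2 : ℝ) ^ (-(t * ε))) ^ (n + 1) := by gcongr; exact le_abs_self C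
    _ ≤ |C| * 2 ^ (-t * N) := by
        rw [← Real.rpow_mul_natCast zero_le_two]
        gcongr
        exact one_le_two

/-- Let `a ∈ [1,∞)ⁿ` and let `ψ ∈ 𝓢(ℝⁿ)` have vanishing moments of all
orders. Then for every `η ∈ 𝓢(ℝⁿ)`, `M ∈ ℕ` and `N > 0` there is a constant `C` such that
`p_M(ψ̌_j * η) ≤ C·2^{−jN}` for every `j ≥ 1`, where `ψ_j(x) = 2^{j|a|}ψ(2^{ja}x)`. -/
theorem seminorm_reflected_dilation_convolution_decay (n : ℕ)
    (a : Fin n → ℝ) (ha : ∀ i, 1 ≤ a i)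
    (ψ : SchwartzMap (Fin n → ℝ) ℝ)
    (hmom : ∀ α : Fin n → ℕ, (∫ x : Fin n → ℝ, (∏ i, x i ^ α i) * ψ x) = 0)
    (η : SchwartzMap (Fin n → ℝ) ℝ) (M : ℕ) (N : ℝ) (hN : 0 < N)
    (c : ℕ → SchwartzMap (Fin n → ℝ) ℝ)
    -- `c j` is the Schwartz function `ψ̌_j * η : x ↦ ∫ ψ_j(y − x)·η(y) dy`
    (hc : ∀ j : ℕ, 1 ≤ j → ∀ x : Fin n → ℝ,
      c j x = ∫ y : Fin n → ℝ,
        ((2:ℝ) ^ ((j:ℝ) * ∑ i, a i)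
          * ψ (fun i => (2:ℝ) ^ ((j:ℝ) * a i) * (y i - x i))) * η y) :
    ∃ C : ℝ, ∀ j : ℕ, 1 ≤ j → pM M (c j) ≤ C * (2:ℝ) ^ (-(j:ℝ) * N) :=
  (seminorm_reflected_dilation_convolution_decay_general (fun i => one_pos.trans_le (ha i))
    (.of_coordinates (.of_schwartzMap ψ) hmom) η _ N).imp fun _ hC j hj =>
      hC j j.cast_nonneg (c j) (hc j hj)

end
end
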